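/- Let d ≥ 1, D := {1,...,d}, let B ⊆ D with |B| > 1, and let φ : [0,∞) → [0,∞) be a nondecreasing function with φ(x)/(x log^{|B|-1} x) → 0 as x → +∞. Then there exists f ∈ L^1(I^d) such that (a) ∫_{I^d} φ(|f|) < ∞, and (b) the means (L_{n(B)}∘R_{n(B')})(f) diverge in Lebesgue measure on I^d as n → ∞; here n(B) denotes the index vector all of whose coordinates equal n. -/

import Mathlib

open MeasureTheory Filter

noncomputable section

/-- The unit cube `[0,1)^d`. -/
def unitCube (d : ℕ) : Set (Fin d → ℝ) := Set.univ.pi fun _ => Set.Ico (0:ℝ) 1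

/-- Lebesgue measure restricted to the unit cube `[0,1)^d`. -/
def cubeMeasure (d : ℕ) : Measure (Fin d → ℝ) := volume.restrict (unitCube d)

/-- The `1`-periodic function equal to `1` on `[0,1/2)` and to `-1` on `[1/2,1)`. -/
def r0 (x : ℝ) : ℝ := if Int.fract x < 1/2 then 1 else -1

/-- The Rademacher functions. -/
def rademacher (n : ℕ) (x : ℝ) : ℝ := r0 (2 ^ n * x)

/-- The Walsh functions (in Paley enumeration, via binary digits). -/
def walsh (n : ℕ) (x : ℝ) : ℝ :=
  ∏ k ∈ Finset.range (n + 1), if n.testBit k then rademacher k x else 1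

/-- The Walsh–Dirichlet kernel `D_n`. -/
def dirichletKernel (n : ℕ) (x : ℝ) : ℝ := ∑ k ∈ Finset.range n, walsh k x

/-- `l_n = ∑_{k=1}^{n-1} 1/k`. -/
def logSum (n : ℕ) : ℝ := ∑ k ∈ Finset.Icc 1 (n - 1), (1 : ℝ) / k

/-- The Nörlund logarithmic kernel `F_n`. -/
def FKernel (n : ℕ) (u : ℝ) : ℝ :=
  (1 / logSum n) * ∑ i ∈ Finset.Ico 1 n, dirichletKernel (n - i) u / i

/-- The Riesz logarithmic kernel `G_n`. -/
def GKernel (n : ℕ) (u : ℝ) : ℝ :=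
  (1 / logSum n) * ∑ i ∈ Finset.Ico 1 n, dirichletKernel i u / i

/-- Walsh–Fourier coefficient of `f` on the unit cube. -/
def walshCoef {d : ℕ} (f : (Fin d → ℝ) → ℝ) (j : Fin d → ℕ) : ℝ :=
  ∫ x, f x * ∏ i, walsh (j i) (x i) ∂(cubeMeasure d)

/-- Rectangular partial sums of the multiple Walsh–Fourier series. -/
def rectPartialSum {d : ℕ} (f : (Fin d → ℝ) → ℝ) (N : Fin d → ℕ) (x : Fin d → ℝ) : ℝ :=
  ∑ j ∈ Fintype.piFinset (fun i => Finset.range (N i)),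
    walshCoef f j * ∏ i, walsh (j i) (x i)

/-- The mixed logarithmic means `(L_{n_B} ∘ R_{n_{B'}})(f)`. -/
def mixedLogMean {d : ℕ} (B : Finset (Fin d)) (f : (Fin d → ℝ) → ℝ)
    (n : Fin d → ℕ) (x : Fin d → ℝ) : ℝ :=
  (∏ j, logSum (n j))⁻¹ *
    ∑ i ∈ Fintype.piFinset (fun j => Finset.Ico 1 (n j)),
      rectPartialSum f (fun j => if j ∈ B then n j - i j else i j) x / ∏ j, (i j : ℝ)

/-- A Young function: convex, continuous, even, vanishing at `0`, with
`Q(u)/u → ∞` at `+∞` and `Q(u)/u → 0` at `0`. -/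
structure YoungFunction where
  toFun : ℝ → ℝ
  nonneg : ∀ u, 0 ≤ toFun u
  convexOn : ConvexOn ℝ Set.univ toFun
  continuous : Continuous toFun
  even : ∀ u, toFun (-u) = toFun u
  map_zero : toFun 0 = 0
  tendsto_atTop : Tendsto (fun u => toFun u / u) atTop atTop
  tendsto_zero : Tendsto (fun u => toFun u / u) (nhdsWithin 0 {(0:ℝ)}ᶜ) (nhds 0)

/-- The set of admissible constants `k` in the Luxemburg norm of `f`. -/
def orliczSet {d : ℕ} (Q : YoungFunction) (f : (Fin d → ℝ) → ℝ) : Set ℝ :=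
  {k | 0 < k ∧ Integrable (fun x => Q.toFun (|f x| / k)) (cubeMeasure d) ∧
    ∫ x, Q.toFun (|f x| / k) ∂(cubeMeasure d) ≤ 1}

/-- `f` belongs to the Orlicz space `L_Q(I^d)`. -/
def MemOrlicz {d : ℕ} (Q : YoungFunction) (f : (Fin d → ℝ) → ℝ) : Prop :=
  Measurable f ∧ (orliczSet Q f).Nonempty

/-- The Luxemburg norm on the Orlicz space `L_Q(I^d)`. -/
def orliczNorm {d : ℕ} (Q : YoungFunction) (f : (Fin d → ℝ) → ℝ) : ℝ :=
  sInf (orliczSet Q f)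

/-- `p_n = 2^{2n} + 2^{2n-2} + ⋯ + 2^0`. -/
def pIdx (n : ℕ) : ℕ := ∑ k ∈ Finset.range (n + 1), 4 ^ k

/-- `m̃ = ⌊ l_{p_{⌊m/2⌋}-1}/16 - 2^15 ⌋`. -/
def mTilde (m : ℕ) : ℤ := ⌊logSum (pIdx (m / 2) - 1) / 16 - 2 ^ 15⌋

/-- `m₀ = min{m : m̃ > 1}`. -/
def m₀ : ℕ := sInf {m : ℕ | 1 < mTilde m}

/-- The set `Ω_n`. -/
def Omega (n : ℕ) : Set ℝ :=
  ⋃ m ∈ Finset.Icc n (2 * n),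
    Set.Ico ((2:ℝ) ^ (-(m:ℤ) - 1) + (2:ℝ) ^ (-(m:ℤ) - mTilde m)) ((2:ℝ) ^ (-(m:ℤ)))

/-- `k`-th binary digit of `x` (the expansion not terminating in `1`'s). -/
def binDigit (k : ℕ) (x : ℝ) : ℕ := (⌊x * 2 ^ (k + 1)⌋).toNat % 2

/-- Dyadic addition on `[0,1)`. -/
def dyadicAdd (x t : ℝ) : ℝ :=
  ∑' k : ℕ, |(binDigit k x : ℝ) - (binDigit k t : ℝ)| / 2 ^ (k + 1)

/-- Dyadic convolution `f ∗ K` on `[0,1)`. -/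
def dyadicConv (f K : ℝ → ℝ) (x : ℝ) : ℝ :=
  ∫ t in Set.Ico (0:ℝ) 1, f t * K (dyadicAdd x t)

/-- Lebesgue measure restricted to `[0,1)`. -/
def unitMeasure : Measure ℝ := volume.restrict (Set.Ico (0:ℝ) 1)

/-- A set `A ⊆ L_Q(I^d)` is nowhere dense w.r.t. the Luxemburg norm. -/
def OrliczNowhereDense {d : ℕ} (Q : YoungFunction) (A : Set ((Fin d → ℝ) → ℝ)) : Prop :=
  ∀ f, MemOrlicz Q f → ∀ ε > 0, ∃ g, MemOrlicz Q g ∧ ∃ δ > 0,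
    (∀ h, MemOrlicz Q h → orliczNorm Q (h - g) < δ → orliczNorm Q (h - f) < ε) ∧
    (∀ h, MemOrlicz Q h → orliczNorm Q (h - g) < δ → h ∉ A)

/-- A set `A ⊆ L_Q(I^d)` is of first Baire category (meager) w.r.t. the Luxemburg norm. -/
def OrliczMeager {d : ℕ} (Q : YoungFunction) (A : Set ((Fin d → ℝ) → ℝ)) : Prop :=
  ∃ F : ℕ → Set ((Fin d → ℝ) → ℝ), (∀ k, OrliczNowhereDense Q (F k)) ∧ A ⊆ ⋃ k, F k

/-!
Along the indices `n = p_A = ∑_{k ≤ A} 4^k` the Nörlund logarithmic kernel `F_n` is at least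
`κ 4^ν` in absolute value on half of the shell `[2^(-2ν-1), 2^(-2ν))`: on that shell the top block
of the binary expansion dominates, since by orthogonality the lower blocks have a small second
moment and the Chebyshev inequality applies. Let `b = |B|`. A product of `b` such kernels is thus at
least `λ = κ^b 4^(2bK)` on parts of each of the `K^(b-1)` shell boxes with `∑ ν_i = 2bK`, a set
of measure about `K^(b-1) / λ`. Translates of this set cover a fixed part of the cube as soon as
there are about `λ K^(1-b)` of them, and with suitable signs the translated kernels do not cancel.
Hence there are functions of `L¹` norm about `c K^(1-b)` and of height exponential in `K` whose
means exceed `c` on a quarter of the cube; as `φ(x) = o(x log^(b-1) x)`, their `φ`-integrals tend to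
`0`. A gliding hump sums such functions to an `f` whose means are unbounded in measure.
-/

/-! ### Walsh monomials -/

section WalshMonomial

/-- The `j`-th Walsh function as a monomial in the sequence `s` of its Rademacher factors, so that
it can be evaluated on arbitrary sign sequences as well as on points of `[0,1)`. -/
def walshMonomial {M : Type*} [CommMonoid M] (j : ℕ) (s : ℕ → M) : M :=
  ∏ k ∈ Finset.range (j + 1), if j.testBit k then s k else 1

section CommMonoid

variable {M : Type*} [CommMonoid M]

lemma prod_range_testBit_eq {j a b : ℕ} (hab : a ≤ b) (hj : j < 2 ^ a) (s : ℕ → M) :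
    ∏ k ∈ Finset.range a, (if j.testBit k then s k else 1) =
      ∏ k ∈ Finset.range b, (if j.testBit k then s k else 1) := by
  refine Finset.prod_subset (Finset.range_subset_range.2 hab) fun k _ hk => ?_
  have hjk : j < 2 ^ k :=
    hj.trans_le (Nat.pow_le_pow_right two_pos (not_lt.1 (Finset.mem_range.not.1 hk)))
  simp [Nat.testBit_lt_two_pow hjk]

lemma walshMonomial_eq_prod_range {j m : ℕ} (hj : j < 2 ^ m) (s : ℕ → M) :
    walshMonomial j s = ∏ k ∈ Finset.range m, if j.testBit k then s k else 1 := by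
  have hj' : j < 2 ^ (j + 1) := (Nat.lt_succ_self j).trans Nat.lt_two_pow_self
  rcases le_total m (j + 1) with h | h
  · exact (prod_range_testBit_eq h hj s).symm
  · exact prod_range_testBit_eq h hj' s

lemma walshMonomial_congr {j m : ℕ} (hj : j < 2 ^ m) {s t : ℕ → M} (hst : ∀ k < m, s k = t k) :
    walshMonomial j s = walshMonomial j t := by
  rw [walshMonomial_eq_prod_range hj, walshMonomial_eq_prod_range hj]
  exact Finset.prod_congr rfl fun k hk => by rw [hst k (Finset.mem_range.1 hk)]

lemma walshMonomial_mul (j : ℕ) (s t : ℕ → M) :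
    walshMonomial j (fun k => s k * t k) = walshMonomial j s * walshMonomial j t := by
  unfold walshMonomial
  rw [← Finset.prod_mul_distrib]
  exact Finset.prod_congr rfl fun k _ => by split_ifs <;> simp

@[simp]
lemma walshMonomial_zero (s : ℕ → M) : walshMonomial 0 s = 1 := by simp [walshMonomial]

lemma walshMonomial_one (s : ℕ → M) : walshMonomial 1 s = s 0 := by
  simp [walshMonomial_eq_prod_range (m := 1) one_lt_two]

lemma walshMonomial_two_pow_mul_add (m a : ℕ) {b : ℕ} (hb : b < 2 ^ m) (s : ℕ → M) :
    walshMonomial (2 ^ m * a + b) s = walshMonomial b s * walshMonomial a fun k => s (m + k) := by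
  have ha : a < 2 ^ a := Nat.lt_two_pow_self
  have hlt : 2 ^ m * a + b < 2 ^ (m + a) := by
    rw [pow_add]
    calc 2 ^ m * a + b < 2 ^ m * (a + 1) := by rw [mul_add_one]; omega
      _ ≤ 2 ^ m * 2 ^ a := Nat.mul_le_mul_left _ ha
  rw [walshMonomial_eq_prod_range hlt, walshMonomial_eq_prod_range hb,
    walshMonomial_eq_prod_range ha, Finset.prod_range_add]
  congr 1
  · refine Finset.prod_congr rfl fun k hk => ?_
    rw [Nat.testBit_two_pow_mul_add a hb, if_pos (Finset.mem_range.1 hk)]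
  · refine Finset.prod_congr rfl fun k _ => ?_
    simp [Nat.testBit_two_pow_mul_add a hb]

lemma walshMonomial_two_pow_mul (m a : ℕ) (s : ℕ → M) :
    walshMonomial (2 ^ m * a) s = walshMonomial a fun k => s (m + k) := by
  simpa using walshMonomial_two_pow_mul_add m a (b := 0) (by positivity) s

lemma walshMonomial_two_pow_add (m : ℕ) {b : ℕ} (hb : b < 2 ^ m) (s : ℕ → M) :
    walshMonomial (2 ^ m + b) s = walshMonomial b s * s m := by
  simpa [walshMonomial_one] using walshMonomial_two_pow_mul_add m 1 hb s

lemma walshMonomial_xor (a b : ℕ) {s : ℕ → M} (hs : ∀ k, s k * s k = 1) :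
    walshMonomial (a ^^^ b) s = walshMonomial a s * walshMonomial b s := by
  have ha : a < 2 ^ (a + b) :=
    Nat.lt_two_pow_self.trans_le (Nat.pow_le_pow_right two_pos (Nat.le_add_right a b))
  have hb : b < 2 ^ (a + b) :=
    Nat.lt_two_pow_self.trans_le (Nat.pow_le_pow_right two_pos (Nat.le_add_left b a))
  rw [walshMonomial_eq_prod_range ha, walshMonomial_eq_prod_range hb,
    walshMonomial_eq_prod_range (Nat.xor_lt_two_pow ha hb), ← Finset.prod_mul_distrib]
  refine Finset.prod_congr rfl fun k _ => ?_
  rw [Nat.testBit_xor]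
  cases a.testBit k <;> cases b.testBit k <;> simp [hs]

lemma walshMonomial_mul_self (a : ℕ) {s : ℕ → M} (hs : ∀ k, s k * s k = 1) :
    walshMonomial a s * walshMonomial a s = 1 := by
  rw [← walshMonomial_xor a a hs, Nat.xor_self, walshMonomial_zero]

end CommMonoid

lemma sum_range_two_pow_walshMonomial {R : Type*} [CommSemiring R] (N : ℕ) (s : ℕ → R) :
    ∑ j ∈ Finset.range (2 ^ N), walshMonomial j s = ∏ k ∈ Finset.range N, (1 + s k) := by
  induction N with
  | zero => simp
  | succ N ih =>
    rw [pow_succ, mul_two, Finset.sum_range_add, Finset.prod_range_succ, ← ih, mul_add, mul_one,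
      Finset.sum_mul]
    congr 1
    exact Finset.sum_congr rfl fun b hb => walshMonomial_two_pow_add N (Finset.mem_range.1 hb) s

lemma abs_walshMonomial (a : ℕ) {s : ℕ → ℝ} (hs : ∀ k, s k * s k = 1) :
    |walshMonomial a s| = 1 := by
  rcases mul_self_eq_one_iff.1 (walshMonomial_mul_self a hs) with h | h <;> simp [h]

end WalshMonomial

/-! ### Rademacher and Walsh functions -/

lemma r0_mul_self (x : ℝ) : r0 x * r0 x = 1 := by
  unfold r0
  split_ifs <;> norm_num

lemma r0_add_natCast (x : ℝ) (n : ℕ) : r0 (x + n) = r0 x := by simp [r0]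

lemma r0_antiperiodic : Function.Antiperiodic r0 (1 / 2) := by
  intro x
  unfold r0
  have hnonneg := Int.fract_nonneg x
  have hlt := Int.fract_lt_one x
  by_cases h : Int.fract x < 1 / 2
  · have hfract : Int.fract (x + 1 / 2) = Int.fract x + 1 / 2 := by
      refine Int.fract_eq_iff.2 ⟨by linarith, by linarith, ⌊x⌋, ?_⟩
      rw [Int.fract]
      ring
    rw [hfract, if_pos h, if_neg (by linarith)]
  · have hfract : Int.fract (x + 1 / 2) = Int.fract x - 1 / 2 := by
      refine Int.fract_eq_iff.2 ⟨by linarith, by linarith, ⌊x⌋ + 1, ?_⟩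
      rw [Int.fract]
      push_cast
      ring
    rw [hfract, if_neg h, if_pos (by linarith), neg_neg]

lemma measurable_r0 : Measurable r0 :=
  Measurable.ite (measurableSet_lt measurable_fract measurable_const)
    measurable_const measurable_const

lemma rademacher_mul_self (k : ℕ) (x : ℝ) : rademacher k x * rademacher k x = 1 := r0_mul_self _

lemma measurable_rademacher (n : ℕ) : Measurable (rademacher n) :=
  measurable_r0.comp (measurable_const.mul measurable_id)

lemma rademacher_antiperiodic (k : ℕ) :
    Function.Antiperiodic (rademacher k) (1 / 2 ^ (k + 1)) := by
  intro x
  unfold rademacher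
  rw [← r0_antiperiodic]
  congr 1
  field_simp
  ring

lemma rademacher_add_periodic (k i : ℕ) :
    Function.Periodic (rademacher (k + i)) (1 / 2 ^ k) := by
  intro x
  unfold rademacher
  rw [← r0_add_natCast (2 ^ (k + i) * x) (2 ^ i)]
  congr 1
  push_cast
  field_simp
  ring

lemma walsh_eq_walshMonomial (j : ℕ) (x : ℝ) :
    walsh j x = walshMonomial j fun k => rademacher k x := rfl

lemma measurable_walsh (n : ℕ) : Measurable (walsh n) := by
  refine Finset.measurable_prod _ fun k _ => ?_
  split_ifs
  · exact measurable_rademacher k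
  · exact measurable_const

lemma abs_walsh (n : ℕ) (x : ℝ) : |walsh n x| = 1 :=
  abs_walshMonomial n fun k => rademacher_mul_self k x

lemma walsh_zero (x : ℝ) : walsh 0 x = 1 := walshMonomial_zero _

lemma walsh_xor (a b : ℕ) (x : ℝ) : walsh (a ^^^ b) x = walsh a x * walsh b x :=
  walshMonomial_xor a b fun k => rademacher_mul_self k x

lemma walsh_periodic (n : ℕ) : Function.Periodic (walsh n) 1 := by
  intro x
  refine Finset.prod_congr rfl fun k _ => ?_
  have hk := rademacher_add_periodic 0 k x
  rw [pow_zero, div_one, zero_add] at hk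
  rw [hk]

lemma exists_antiperiodic_walsh {n : ℕ} (hn : n ≠ 0) :
    ∃ c, Function.Antiperiodic (walsh n) c := by
  obtain ⟨k, m, ⟨a, rfl⟩, rfl⟩ := Nat.exists_eq_two_pow_mul_odd hn
  have hfactor : ∀ y, walsh (2 ^ k * (2 * a + 1)) y =
      rademacher k y * walshMonomial a fun i => rademacher (k + 1 + i) y := fun y => by
    have hodd := walshMonomial_two_pow_mul_add 1 a one_lt_two fun i => rademacher (k + i) y
    rw [walsh_eq_walshMonomial, walshMonomial_two_pow_mul, ← pow_one 2, hodd, walshMonomial_one]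
    simp only [add_zero, add_assoc]
  refine ⟨1 / 2 ^ (k + 1), fun x => ?_⟩
  simp only [hfactor, rademacher_antiperiodic k x, (rademacher_add_periodic (k + 1) _) x, neg_mul]

instance : IsProbabilityMeasure unitMeasure := ⟨by simp [unitMeasure]⟩

lemma integrable_walsh (j : ℕ) : Integrable (walsh j) unitMeasure :=
  .of_bound (measurable_walsh j).aestronglyMeasurable 1
    (Eventually.of_forall fun x => by rw [Real.norm_eq_abs, abs_walsh])

lemma intervalIntegral_eq_zero_of_periodic_of_antiperiodic {f : ℝ → ℝ} {T c : ℝ}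
    (hT : Function.Periodic f T) (hc : Function.Antiperiodic f c) : ∫ x in 0..T, f x = 0 := by
  have hshift : ∫ x in 0..T, f (x + c) = ∫ x in 0..T, f x := by
    rw [intervalIntegral.integral_comp_add_right, zero_add, add_comm T c]
    simpa using hT.intervalIntegral_add_eq c 0
  have hneg : ∫ x in 0..T, f (x + c) = -∫ x in 0..T, f x := by
    simp only [hc _]
    exact intervalIntegral.integral_neg
  linarith

lemma integral_walsh (n : ℕ) : ∫ x, walsh n x ∂unitMeasure = if n = 0 then 1 else 0 := by
  split_ifs with hn
  · simp [hn, walsh_zero]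
  · obtain ⟨c, hc⟩ := exists_antiperiodic_walsh hn
    rw [unitMeasure, integral_Ico_eq_integral_Ioc, ← intervalIntegral.integral_of_le zero_le_one]
    exact intervalIntegral_eq_zero_of_periodic_of_antiperiodic (walsh_periodic n) hc

lemma integral_walsh_mul_walsh (a b : ℕ) :
    ∫ x, walsh a x * walsh b x ∂unitMeasure = if a = b then 1 else 0 := by
  simp only [← walsh_xor, integral_walsh, Nat.xor_eq_zero_iff]

lemma cubeMeasure_eq_pi (d : ℕ) :
    cubeMeasure d = Measure.pi fun _ : Fin d => unitMeasure := by
  unfold cubeMeasure unitCube unitMeasure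
  rw [volume_pi, Measure.restrict_pi_pi]

instance (d : ℕ) : IsProbabilityMeasure (cubeMeasure d) := by
  rw [cubeMeasure_eq_pi]
  infer_instance

/-! ### Sign vectors and dyadic cells -/

/-- The group `{±1}^N`, which indexes the dyadic intervals of length `2⁻ᴺ` by the signs of
`r_0, …, r_{N-1}` on them. -/
abbrev SignVec (N : ℕ) := Fin N → ℤˣ

instance : MeasurableSingletonClass ℤˣ := ⟨fun u => by
  refine ⟨{(u : ℤ)}, measurableSet_singleton _, ?_⟩
  ext v
  exact ⟨fun h => Units.ext h, fun h => congrArg Units.val h⟩⟩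

section SignVec

variable {N : ℕ}

/-- A sign vector as a real sequence, extended by `1` beyond its length. -/
def signSeq (γ : SignVec N) (k : ℕ) : ℝ := if h : k < N then ((γ ⟨k, h⟩ : ℤ) : ℝ) else 1

lemma signSeq_mul (γ δ : SignVec N) : signSeq (γ * δ) = fun k => signSeq γ k * signSeq δ k := by
  funext k
  unfold signSeq
  split_ifs <;> simp

lemma signSeq_mul_self (γ : SignVec N) (k : ℕ) : signSeq γ k * signSeq γ k = 1 := by
  unfold signSeq
  split_ifs with h
  · rcases Int.units_eq_one_or (γ ⟨k, h⟩) with h | h <;> simp [h]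
  · simp

lemma signSeq_eq_one_or (γ : SignVec N) (k : ℕ) : signSeq γ k = 1 ∨ signSeq γ k = -1 :=
  mul_self_eq_one_iff.1 (signSeq_mul_self γ k)

lemma signSeq_eq_one_iff (γ : SignVec N) (k : Fin N) : signSeq γ k = 1 ↔ γ k = 1 := by
  rw [signSeq, dif_pos k.2, Fin.eta, Units.ext_iff]
  exact Int.cast_eq_one

lemma sum_walshMonomial_signSeq (γ : SignVec N) :
    ∑ j ∈ Finset.range (2 ^ N), walshMonomial j (signSeq γ) = if γ = 1 then 2 ^ N else 0 := by
  rw [sum_range_two_pow_walshMonomial]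
  split_ifs with hγ
  · have hone : ∀ k ∈ Finset.range N, 1 + signSeq γ k = 2 := fun k hk => by
      rw [(signSeq_eq_one_iff γ ⟨k, Finset.mem_range.1 hk⟩).2 (congrFun hγ _)]
      norm_num
    rw [Finset.prod_congr rfl hone, Finset.prod_const, Finset.card_range]
  · obtain ⟨k, hk⟩ := Function.ne_iff.1 hγ
    have hneg : signSeq γ k = -1 :=
      (signSeq_eq_one_or γ k).resolve_left ((signSeq_eq_one_iff γ k).not.2 hk)
    exact Finset.prod_eq_zero (Finset.mem_range.2 k.2) (by rw [hneg, add_neg_cancel])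

/-- The signs of the first `N` Rademacher functions at `x`, identifying the dyadic interval of
length `2⁻ᴺ` that contains `x`. -/
def rademacherSigns (N : ℕ) (x : ℝ) : SignVec N :=
  fun k => if Int.fract (2 ^ (k : ℕ) * x) < 1 / 2 then 1 else -1

lemma signSeq_rademacherSigns {k : ℕ} (hk : k < N) (x : ℝ) :
    signSeq (rademacherSigns N x) k = rademacher k x := by
  simp only [signSeq, hk, rademacherSigns, rademacher, r0, dif_pos]
  split_ifs <;> simp

lemma walsh_eq_walshMonomial_rademacherSigns {j : ℕ} (hj : j < 2 ^ N) (x : ℝ) :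
    walsh j x = walshMonomial j (signSeq (rademacherSigns N x)) :=
  walshMonomial_congr hj fun _ hk => (signSeq_rademacherSigns hk x).symm

lemma measurable_rademacherSigns (N : ℕ) : Measurable (rademacherSigns N) :=
  measurable_pi_lambda _ fun _ => Measurable.ite (measurableSet_lt (measurable_fract.comp
    (measurable_const.mul measurable_id)) measurable_const) measurable_const measurable_const

lemma sum_walshMonomial_mul_walsh (γ : SignVec N) (x : ℝ) :
    ∑ j ∈ Finset.range (2 ^ N), walshMonomial j (signSeq γ) * walsh j x =
      if rademacherSigns N x = γ then 2 ^ N else 0 := by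
  have hmul : ∀ j ∈ Finset.range (2 ^ N), walshMonomial j (signSeq γ) * walsh j x =
      walshMonomial j (signSeq (γ⁻¹ * rademacherSigns N x)) := fun j hj => by
    have hinv : γ⁻¹ = γ := funext fun k => Int.units_inv_eq_self (γ k)
    rw [walsh_eq_walshMonomial_rademacherSigns (Finset.mem_range.1 hj), hinv, signSeq_mul,
      walshMonomial_mul]
  simp only [Finset.sum_congr rfl hmul, sum_walshMonomial_signSeq, inv_mul_eq_one, eq_comm]

lemma unitMeasure_rademacherSigns_eq (γ : SignVec N) :
    unitMeasure {x | rademacherSigns N x = γ} = ((2 : ENNReal) ^ N)⁻¹ := by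
  have hmeas : MeasurableSet {x | rademacherSigns N x = γ} :=
    measurable_rademacherSigns N (measurableSet_singleton γ)
  have hindicator : ∀ x, ∑ j ∈ Finset.range (2 ^ N), walshMonomial j (signSeq γ) * walsh j x =
      Set.indicator {x | rademacherSigns N x = γ} (fun _ => (2 : ℝ) ^ N) x := fun x => by
    simp [sum_walshMonomial_mul_walsh, Set.indicator_apply]
  have hreal : unitMeasure.real {x | rademacherSigns N x = γ} * 2 ^ N = 1 := by
    rw [← smul_eq_mul, ← integral_indicator_const _ hmeas, ← funext hindicator,
      integral_finsetSum _ fun j _ => (integrable_walsh j).const_mul _]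
    simp [integral_const_mul, integral_walsh]
  rw [← ofReal_measureReal, eq_inv_of_mul_eq_one_left hreal,
    ENNReal.ofReal_inv_of_pos (by positivity), ENNReal.ofReal_pow (by norm_num)]
  simp

end SignVec

section Cells

variable {d : ℕ} (B : Finset (Fin d)) (N : ℕ)

/-- The Rademacher signs of the coordinates in `B`, identifying the dyadic box of side `2⁻ᴺ` in
these coordinates that contains `x`. -/
def rademacherSignsOn (x : Fin d → ℝ) : B → SignVec N := fun i => rademacherSigns N (x i)

lemma measurable_rademacherSignsOn : Measurable (rademacherSignsOn B N) :=
  measurable_pi_lambda _ fun _ => (measurable_rademacherSigns N).comp (measurable_pi_apply _)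

lemma setOf_rademacherSignsOn_eq (y : B → SignVec N) :
    {x | rademacherSignsOn B N x = y} = Set.univ.pi fun i : Fin d =>
      if h : i ∈ B then {u | rademacherSigns N u = y ⟨i, h⟩} else Set.univ := by
  ext x
  simp only [Set.mem_ofPred_eq, Set.mem_pi, Set.mem_univ, true_imp_iff]
  constructor
  · intro h i
    split_ifs with hi
    · exact congrFun h ⟨i, hi⟩
    · trivial
  · intro h
    funext i
    simpa [rademacherSignsOn] using h i

lemma measureReal_rademacherSignsOn_eq (y : B → SignVec N) :
    (cubeMeasure d).real {x | rademacherSignsOn B N x = y} = ((2 ^ N) ^ B.card)⁻¹ := by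
  have hfactor : ∀ i : Fin d,
      unitMeasure (if h : i ∈ B then {u | rademacherSigns N u = y ⟨i, h⟩} else Set.univ) =
        if i ∈ B then ((2 : ENNReal) ^ N)⁻¹ else 1 := fun i => by
    split_ifs
    · exact unitMeasure_rademacherSigns_eq _
    · exact measure_univ
  rw [Measure.real, setOf_rademacherSignsOn_eq, cubeMeasure_eq_pi, Measure.pi_pi]
  simp [hfactor, ENNReal.toReal_inv]

lemma measureReal_rademacherSignsOn_mem (S : Finset (B → SignVec N)) :
    (cubeMeasure d).real {x | rademacherSignsOn B N x ∈ S} = S.card * ((2 ^ N) ^ B.card)⁻¹ := by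
  have hunion : {x | rademacherSignsOn B N x ∈ S} =
      ⋃ y ∈ S, {x | rademacherSignsOn B N x = y} := by
    ext x
    simp
  have hdisj : (S : Set (B → SignVec N)).PairwiseDisjoint
      fun y => {x | rademacherSignsOn B N x = y} := fun y _ z _ hyz =>
    Set.disjoint_left.2 fun _ hx hx' => hyz (hx.symm.trans hx')
  rw [hunion, measureReal_biUnion_finset hdisj
    fun y _ => measurable_rademacherSignsOn B N (measurableSet_singleton y)]
  simp [measureReal_rademacherSignsOn_eq]

end Cells

/-! ### The Nörlund logarithmic kernel on sign sequences -/

lemma logSum_mono : Monotone logSum := fun _ _ h =>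
  Finset.sum_le_sum_of_subset_of_nonneg
    (Finset.Icc_subset_Icc le_rfl (Nat.sub_le_sub_right h 1)) fun _ _ _ => by positivity

lemma logSum_nonneg (n : ℕ) : 0 ≤ logSum n := Finset.sum_nonneg fun _ _ => by positivity

@[simp]
lemma logSum_zero : logSum 0 = 0 := by simp [logSum]

lemma logSum_succ {n : ℕ} (hn : 1 ≤ n) : logSum (n + 1) = logSum n + 1 / n := by
  obtain ⟨m, rfl⟩ : ∃ m, n = m + 1 := ⟨n - 1, by omega⟩
  simp only [logSum, Nat.add_sub_cancel]
  rw [Finset.sum_Icc_succ_top (by omega)]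

lemma logSum_add_sub_le {n : ℕ} (hn : 1 ≤ n) (r : ℕ) : logSum (n + r) - logSum n ≤ r / n := by
  induction r with
  | zero => simp
  | succ r ih =>
    have hstep : (1 : ℝ) / (n + r : ℕ) ≤ 1 / n :=
      one_div_le_one_div_of_le (by exact_mod_cast hn) (by exact_mod_cast Nat.le_add_right n r)
    rw [← add_assoc, logSum_succ (by omega), Nat.cast_succ, add_div]
    linarith

lemma sum_range_mul {M : Type*} [AddCommMonoid M] (q A : ℕ) (f : ℕ → M) :
    ∑ j ∈ Finset.range (q * A), f j =
      ∑ a ∈ Finset.range A, ∑ b ∈ Finset.range q, f (q * a + b) := by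
  induction A with
  | zero => simp
  | succ A ih => rw [mul_add, mul_one, Finset.sum_range_add, ih, Finset.sum_range_succ]

/-- The unnormalised Nörlund logarithmic kernel `l_n F_n = ∑_{j<n} l_{n-j} w_j`, evaluated on a
sign sequence. -/
def norlundSum (n : ℕ) (s : ℕ → ℝ) : ℝ :=
  ∑ j ∈ Finset.range n, logSum (n - j) * walshMonomial j s

/-- The coefficient of `w_{2^(m+1) a}` in `norlundSum n` on the sequences that begin with `m` ones
followed by `-1`, where each block of `2^(m+1)` consecutive terms collapses to a single one. -/
def norlundBlockCoeff (n m a : ℕ) : ℝ :=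
  ∑ b ∈ Finset.range (2 ^ m),
    (logSum (n - (2 ^ (m + 1) * a + b)) - logSum (n - (2 ^ (m + 1) * a + (2 ^ m + b))))

lemma norlundSum_eq_sum_range {n M : ℕ} (h : n ≤ M) (s : ℕ → ℝ) :
    norlundSum n s = ∑ j ∈ Finset.range M, logSum (n - j) * walshMonomial j s := by
  refine Finset.sum_subset (Finset.range_subset_range.2 h) fun j _ hj => ?_
  rw [Nat.sub_eq_zero_of_le (not_lt.1 (Finset.mem_range.not.1 hj)), logSum_zero, zero_mul]

lemma norlundSum_eq_sum_blockCoeff {n m A : ℕ} (hn : n ≤ 2 ^ (m + 1) * A) {s : ℕ → ℝ}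
    (hone : ∀ k < m, s k = 1) (hneg : s m = -1) :
    norlundSum n s = ∑ a ∈ Finset.range A,
      norlundBlockCoeff n m a * walshMonomial (2 ^ (m + 1) * a) s := by
  have hlow : ∀ b < 2 ^ m, walshMonomial b s = 1 := fun b hb => by
    rw [walshMonomial_congr hb hone]
    simp [walshMonomial]
  rw [norlundSum_eq_sum_range hn, sum_range_mul]
  refine Finset.sum_congr rfl fun a _ => ?_
  have hhalves : Finset.range (2 ^ (m + 1)) = Finset.range (2 ^ m + 2 ^ m) := by
    rw [pow_succ, mul_two]
  rw [hhalves, Finset.sum_range_add, norlundBlockCoeff, Finset.sum_sub_distrib, sub_mul,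
    Finset.sum_mul, Finset.sum_mul, sub_eq_add_neg, ← Finset.sum_neg_distrib,
    walshMonomial_two_pow_mul]
  congr 1 <;> refine Finset.sum_congr rfl fun b hb => ?_ <;> rw [Finset.mem_range] at hb
  · rw [walshMonomial_two_pow_mul_add (m + 1) a (by rw [pow_succ]; omega), hlow b hb, one_mul]
  · rw [walshMonomial_two_pow_mul_add (m + 1) a (by rw [pow_succ]; omega),
      walshMonomial_two_pow_add m hb, hlow b hb, hneg]
    ring

lemma norlundBlockCoeff_nonneg (n m a : ℕ) : 0 ≤ norlundBlockCoeff n m a :=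
  Finset.sum_nonneg fun _ _ => sub_nonneg.2 (logSum_mono
    (Nat.sub_le_sub_left (Nat.add_le_add_left (Nat.le_add_left _ _) _) _))

lemma le_norlundBlockCoeff_top {n m a r : ℕ} (hn : n = 2 ^ (m + 1) * a + 2 ^ m + r)
    (hr : r ≤ 2 ^ m) : ((2 : ℝ) ^ m - r) * logSum (r + 1) ≤ norlundBlockCoeff n m a :=
  calc ((2 : ℝ) ^ m - r) * logSum (r + 1) = ∑ b ∈ Finset.Ico r (2 ^ m), logSum (r + 1) := by
        rw [Finset.sum_const, Nat.card_Ico, nsmul_eq_mul, Nat.cast_sub hr]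
        push_cast
        ring
    _ ≤ ∑ b ∈ Finset.Ico r (2 ^ m), (logSum (n - (2 ^ (m + 1) * a + b)) -
          logSum (n - (2 ^ (m + 1) * a + (2 ^ m + b)))) := by
        refine Finset.sum_le_sum fun b hb => ?_
        rw [Finset.mem_Ico] at hb
        have hexhausted : n - (2 ^ (m + 1) * a + (2 ^ m + b)) = 0 := by omega
        rw [hexhausted, logSum_zero, sub_zero]
        exact logSum_mono (by omega)
    _ ≤ norlundBlockCoeff n m a :=
        Finset.sum_le_sum_of_subset_of_nonneg (fun b => by simp)
          fun b _ _ => sub_nonneg.2 (logSum_mono (by omega))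

lemma norlundBlockCoeff_le {n m a i : ℕ} (hn : 2 ^ (m + 1) * (a + (i + 1)) + 2 ^ m ≤ n) :
    norlundBlockCoeff n m a ≤ 2 ^ m / (i + 1) := by
  have hterm : ∀ b ∈ Finset.range (2 ^ m), logSum (n - (2 ^ (m + 1) * a + b)) -
      logSum (n - (2 ^ (m + 1) * a + (2 ^ m + b))) ≤ 1 / (i + 1) := fun b hb => by
    rw [Finset.mem_range] at hb
    have hpos : 1 ≤ 2 ^ m := Nat.one_le_two_pow
    have hexpand : 2 ^ (m + 1) * (a + (i + 1)) =
        2 ^ (m + 1) * a + 2 * (2 ^ m * i) + 2 * 2 ^ m := by ring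
    set r := n - (2 ^ (m + 1) * a + (2 ^ m + b))
    have hr : 2 ^ m * i + 2 ^ m ≤ r := by omega
    have hr' : (2 : ℝ) ^ m * (i + 1) ≤ r := by
      rw [mul_add_one]
      exact_mod_cast hr
    calc logSum (n - (2 ^ (m + 1) * a + b)) - logSum r
        = logSum (r + 2 ^ m) - logSum r := by congr 2; omega
      _ ≤ (2 ^ m : ℕ) / r := logSum_add_sub_le (by omega) _
      _ ≤ 2 ^ m / (2 ^ m * (i + 1)) := by push_cast; gcongr
      _ = 1 / (i + 1) := by field_simp
  calc norlundBlockCoeff n m a ≤ ∑ b ∈ Finset.range (2 ^ m), (1 : ℝ) / (i + 1) :=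
        Finset.sum_le_sum hterm
    _ = 2 ^ m / (i + 1) := by
        rw [Finset.sum_const, Finset.card_range, nsmul_eq_mul]
        push_cast
        ring

lemma sum_range_inv_sq_le_two (A : ℕ) : ∑ i ∈ Finset.range A, (((i : ℝ) + 1) ^ 2)⁻¹ ≤ 2 := by
  have h := sum_Ioo_inv_sq_le (α := ℝ) 0 (A + 1)
  rw [← Finset.Ico_add_one_left_eq_Ioo, Finset.sum_Ico_eq_sum_range] at h
  simpa [add_comm] using h

lemma sum_norlundBlockCoeff_sq_le {n m a₀ : ℕ} (hn : 2 ^ (m + 1) * a₀ + 2 ^ m ≤ n) :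
    ∑ a ∈ Finset.range a₀, norlundBlockCoeff n m a ^ 2 ≤ 2 * (2 ^ m) ^ 2 := by
  rw [← Finset.sum_range_reflect]
  have hterm : ∀ i ∈ Finset.range a₀, norlundBlockCoeff n m (a₀ - 1 - i) ^ 2 ≤
      ((2 : ℝ) ^ m) ^ 2 * (((i : ℝ) + 1) ^ 2)⁻¹ := fun i hi => by
    rw [Finset.mem_range] at hi
    have hle : norlundBlockCoeff n m (a₀ - 1 - i) ≤ 2 ^ m / (i + 1) := by
      refine norlundBlockCoeff_le ?_
      rwa [show a₀ - 1 - i + (i + 1) = a₀ by omega]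
    calc norlundBlockCoeff n m (a₀ - 1 - i) ^ 2 ≤ ((2 : ℝ) ^ m / (i + 1)) ^ 2 :=
          pow_le_pow_left₀ (norlundBlockCoeff_nonneg _ _ _) hle 2
      _ = ((2 : ℝ) ^ m) ^ 2 * (((i : ℝ) + 1) ^ 2)⁻¹ := by rw [div_pow, div_eq_mul_inv]
  calc ∑ i ∈ Finset.range a₀, norlundBlockCoeff n m (a₀ - 1 - i) ^ 2
      ≤ ((2 : ℝ) ^ m) ^ 2 * ∑ i ∈ Finset.range a₀, (((i : ℝ) + 1) ^ 2)⁻¹ := by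
        rw [Finset.mul_sum]
        exact Finset.sum_le_sum hterm
    _ ≤ 2 * (2 ^ m) ^ 2 := by
        rw [mul_comm]
        gcongr
        exact sum_range_inv_sq_le_two a₀

/-! ### Size of the Nörlund kernel on shells -/

/-- The sign vectors whose first `-1` is at index `m`; they index the dyadic intervals inside
`[2^(-m-1), 2^(-m))`. -/
def signShell (N m : ℕ) : Finset (SignVec N) :=
  Fintype.piFinset fun k : Fin N =>
    if (k : ℕ) < m then {1} else if (k : ℕ) = m then {-1} else Finset.univ

lemma mem_signShell {N m : ℕ} {γ : SignVec N} :
    γ ∈ signShell N m ↔ ∀ k : Fin N, ((k : ℕ) < m → γ k = 1) ∧ ((k : ℕ) = m → γ k = -1) := by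
  simp only [signShell, Fintype.mem_piFinset]
  refine forall_congr' fun k => ?_
  split_ifs with hlt heq
  · simp [hlt, hlt.ne]
  · simp [heq]
  · simpa [hlt, heq] using Int.units_eq_one_or (γ k)

lemma signSeq_eq_one_of_mem_signShell {N m k : ℕ} {γ : SignVec N} (hγ : γ ∈ signShell N m)
    (hm : m < N) (hk : k < m) : signSeq γ k = 1 := by
  rw [signSeq, dif_pos (hk.trans hm), (mem_signShell.1 hγ ⟨k, hk.trans hm⟩).1 hk]
  simp

lemma signSeq_eq_neg_one_of_mem_signShell {N m : ℕ} {γ : SignVec N} (hγ : γ ∈ signShell N m)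
    (hm : m < N) : signSeq γ m = -1 := by
  rw [signSeq, dif_pos hm, (mem_signShell.1 hγ ⟨m, hm⟩).2 rfl]
  simp

lemma disjoint_signShell {N m m' : ℕ} (hm : m < N) (hm' : m' < N) (hne : m ≠ m') :
    Disjoint (signShell N m) (signShell N m') := by
  wlog hlt : m < m' generalizing m m'
  · exact (this hm' hm hne.symm (hne.lt_or_gt.resolve_left hlt)).symm
  refine Finset.disjoint_left.2 fun γ hγ hγ' => ?_
  have h1 := signSeq_eq_one_of_mem_signShell hγ' hm' hlt
  rw [signSeq_eq_neg_one_of_mem_signShell hγ hm] at h1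
  norm_num at h1

lemma card_signShell {N m : ℕ} (hm : m < N) : (signShell N m).card = 2 ^ (N - (m + 1)) := by
  obtain ⟨r, rfl⟩ := Nat.exists_eq_add_of_le (Nat.succ_le_of_lt hm)
  have hfactor : ∀ k : Fin (m + 1 + r), (if (k : ℕ) < m then ({1} : Finset ℤˣ) else
      if (k : ℕ) = m then {-1} else Finset.univ).card = if (k : ℕ) < m + 1 then 1 else 2 :=
    fun k => by split_ifs <;> simp <;> omega
  have hhead : ∀ k ∈ Finset.range (m + 1), (if k < m + 1 then 1 else 2) = 1 :=
    fun k hk => if_pos (Finset.mem_range.1 hk)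
  rw [signShell, Fintype.card_piFinset, Finset.prod_congr rfl fun k _ => hfactor k,
    Fin.prod_univ_eq_prod_range (fun k : ℕ => if k < m + 1 then 1 else 2), Finset.prod_range_add,
    Finset.prod_congr rfl hhead, Finset.prod_congr rfl fun k _ => if_neg (by omega)]
  simp

lemma walshMonomial_signSeq {N c : ℕ} (hc : c < 2 ^ N) (γ : SignVec N) :
    walshMonomial c (signSeq γ) =
      ∏ k : Fin N, if c.testBit k then ((γ k : ℤ) : ℝ) else 1 := by
  rw [walshMonomial_eq_prod_range hc, ← Fin.prod_univ_eq_prod_range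
    (fun k => if c.testBit k then signSeq γ k else 1)]
  simp [signSeq]

lemma sum_signShell_walshMonomial {N m c : ℕ} (hc : c < 2 ^ N)
    (hbit : ∃ k, m < k ∧ c.testBit k) :
    ∑ γ ∈ signShell N m, walshMonomial c (signSeq γ) = 0 := by
  obtain ⟨k, hmk, hk⟩ := hbit
  have hkN : k < N := by
    by_contra h
    rw [Nat.testBit_lt_two_pow (hc.trans_le (Nat.pow_le_pow_right two_pos (not_lt.1 h)))] at hk
    exact Bool.false_ne_true hk
  simp only [walshMonomial_signSeq hc, signShell]
  rw [← Finset.prod_univ_sum _ fun (k : Fin N) (u : ℤˣ) =>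
    if c.testBit k then ((u : ℤ) : ℝ) else 1]
  refine Finset.prod_eq_zero (Finset.mem_univ (⟨k, hkN⟩ : Fin N)) ?_
  rw [if_neg hmk.not_gt, if_neg hmk.ne']
  simp only [hk, if_true]
  exact_mod_cast (by decide : ∑ u : ℤˣ, (u : ℤ) = 0)

lemma sum_signShell_sq {N m a₀ : ℕ} (ha₀ : 2 ^ (m + 1) * a₀ ≤ 2 ^ N) (c : ℕ → ℝ) :
    ∑ γ ∈ signShell N m,
        (∑ a ∈ Finset.range a₀, c a * walshMonomial (2 ^ (m + 1) * a) (signSeq γ)) ^ 2 =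
      (signShell N m).card * ∑ a ∈ Finset.range a₀, c a ^ 2 := by
  have horth : ∀ a ∈ Finset.range a₀, ∀ b ∈ Finset.range a₀, a ≠ b →
      ∑ γ ∈ signShell N m, walshMonomial (2 ^ (m + 1) * a ^^^ 2 ^ (m + 1) * b) (signSeq γ) = 0 := by
    intro a ha b hb hab
    have hlt : ∀ a ∈ Finset.range a₀, 2 ^ (m + 1) * a < 2 ^ N := fun a ha =>
      (Nat.mul_lt_mul_of_pos_left (Finset.mem_range.1 ha) (by positivity)).trans_le ha₀
    obtain ⟨k, hk⟩ := Nat.exists_testBit_of_ne_zero (Nat.xor_eq_zero_iff.not.2 hab)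
    refine sum_signShell_walshMonomial (Nat.xor_lt_two_pow (hlt a ha) (hlt b hb))
      ⟨m + 1 + k, by omega, ?_⟩
    simpa [Nat.testBit_two_pow_mul] using hk
  have hexpand : ∀ γ ∈ signShell N m,
      (∑ a ∈ Finset.range a₀, c a * walshMonomial (2 ^ (m + 1) * a) (signSeq γ)) ^ 2 =
        ∑ a ∈ Finset.range a₀, ∑ b ∈ Finset.range a₀, c a * c b *
          walshMonomial (2 ^ (m + 1) * a ^^^ 2 ^ (m + 1) * b) (signSeq γ) := fun γ _ => by
    rw [sq, Finset.sum_mul_sum]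
    refine Finset.sum_congr rfl fun a _ => Finset.sum_congr rfl fun b _ => ?_
    rw [walshMonomial_xor _ _ (signSeq_mul_self γ)]
    ring
  rw [Finset.sum_congr rfl hexpand, Finset.sum_comm, Finset.mul_sum]
  refine Finset.sum_congr rfl fun a ha => ?_
  rw [Finset.sum_comm, Finset.sum_eq_single_of_mem a ha fun b hb hba => by
    rw [← Finset.mul_sum, horth a ha b hb hba.symm, mul_zero]]
  simp only [Nat.xor_self, walshMonomial_zero, mul_one, Finset.sum_const, nsmul_eq_mul, sq]

lemma card_filter_lt_abs_mul_sq_le {ι : Type*} (s : Finset ι) (f : ι → ℝ) {c : ℝ} (hc : 0 ≤ c) :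
    (s.filter fun i => c < |f i|).card * c ^ 2 ≤ ∑ i ∈ s, f i ^ 2 := by
  rw [← nsmul_eq_mul]
  refine (Finset.card_nsmul_le_sum _ (fun i => f i ^ 2) _ fun i hi => ?_).trans
    (Finset.sum_le_sum_of_subset_of_nonneg (Finset.filter_subset _ s) fun _ _ _ => sq_nonneg _)
  rw [← sq_abs (f i)]
  exact pow_le_pow_left₀ hc (Finset.mem_filter.1 hi).2.le 2

lemma le_abs_norlundSum_of_lower_blocks_le {N m n r a₀ : ℕ} (hm : m < N)
    (hn : n = 2 ^ (m + 1) * a₀ + 2 ^ m + r) (hr : 2 * r ≤ 2 ^ m) (hlog : 8 ≤ logSum (r + 1))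
    {γ : SignVec N} (hγ : γ ∈ signShell N m)
    (hlower : |∑ a ∈ Finset.range a₀,
      norlundBlockCoeff n m a * walshMonomial (2 ^ (m + 1) * a) (signSeq γ)| ≤ 2 * 2 ^ m) :
    2 ^ m / 4 * logSum (r + 1) ≤ |norlundSum n (signSeq γ)| := by
  set lower := ∑ a ∈ Finset.range a₀,
    norlundBlockCoeff n m a * walshMonomial (2 ^ (m + 1) * a) (signSeq γ)
  set top := norlundBlockCoeff n m a₀ * walshMonomial (2 ^ (m + 1) * a₀) (signSeq γ)
  have hsplit : norlundSum n (signSeq γ) = top - -lower := by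
    rw [norlundSum_eq_sum_blockCoeff (A := a₀ + 1) (by rw [mul_add_one, hn, pow_succ]; omega)
      (fun k hk => signSeq_eq_one_of_mem_signShell hγ hm hk)
      (signSeq_eq_neg_one_of_mem_signShell hγ hm), Finset.sum_range_succ, sub_neg_eq_add, add_comm]
  have habs : |top| = norlundBlockCoeff n m a₀ := by
    rw [abs_mul, abs_walshMonomial _ (signSeq_mul_self γ), mul_one,
      abs_of_nonneg (norlundBlockCoeff_nonneg _ _ _)]
  have htop := le_norlundBlockCoeff_top hn (by omega)
  have hhalf : (2 : ℝ) ^ m / 2 ≤ 2 ^ m - r := by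
    have hcast : (2 : ℝ) * r ≤ 2 ^ m := by exact_mod_cast hr
    linarith
  have hdom : 2 ^ m / 2 * logSum (r + 1) ≤ norlundBlockCoeff n m a₀ :=
    (mul_le_mul_of_nonneg_right hhalf (logSum_nonneg _)).trans htop
  have hlog' : (2 : ℝ) ^ m / 4 * 8 ≤ 2 ^ m / 4 * logSum (r + 1) := by gcongr
  calc 2 ^ m / 4 * logSum (r + 1) ≤ |top| - |-lower| := by rw [habs, abs_neg]; linarith
    _ ≤ |norlundSum n (signSeq γ)| := hsplit ▸ abs_sub_abs_le_abs_sub _ _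

/- The top block has size at least `2^m l_{r+1} / 2`, while by orthogonality the lower blocks have
mean square at most `2 · 4^m`; Chebyshev's inequality discards at most half of the shell. -/
lemma card_signShell_le_two_mul_card_filter {N m n r a₀ : ℕ} (hm : m < N)
    (hn : n = 2 ^ (m + 1) * a₀ + 2 ^ m + r) (hr : 2 * r ≤ 2 ^ m) (hlog : 8 ≤ logSum (r + 1))
    (hnN : n ≤ 2 ^ N) :
    (signShell N m).card ≤ 2 * ((signShell N m).filter fun γ =>
      2 ^ m / 4 * logSum (r + 1) ≤ |norlundSum n (signSeq γ)|).card := by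
  set lower : SignVec N → ℝ := fun γ => ∑ a ∈ Finset.range a₀,
    norlundBlockCoeff n m a * walshMonomial (2 ^ (m + 1) * a) (signSeq γ)
  have hbad : 2 * ((signShell N m).filter fun γ => 2 * 2 ^ m < |lower γ|).card ≤
      (signShell N m).card := by
    have hcheb := card_filter_lt_abs_mul_sq_le (signShell N m) lower
      (c := 2 * 2 ^ m) (by positivity)
    rw [sum_signShell_sq (by omega)] at hcheb
    have hmoment : ((signShell N m).card : ℝ) * ∑ a ∈ Finset.range a₀,
        norlundBlockCoeff n m a ^ 2 ≤ (signShell N m).card * (2 * (2 ^ m) ^ 2) := by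
      gcongr
      exact sum_norlundBlockCoeff_sq_le (by omega)
    have hpos : (0 : ℝ) < 2 * (2 ^ m) ^ 2 := by positivity
    have hreal : (2 : ℝ) * ((signShell N m).filter fun γ => 2 * 2 ^ m < |lower γ|).card ≤
        (signShell N m).card := le_of_mul_le_mul_right (by linarith) hpos
    exact_mod_cast hreal
  have hgood : (signShell N m).filter (fun γ => ¬ 2 * 2 ^ m < |lower γ|) ⊆
      (signShell N m).filter fun γ => 2 ^ m / 4 * logSum (r + 1) ≤ |norlundSum n (signSeq γ)| :=
    fun γ hγ => by
      rw [Finset.mem_filter, not_lt] at hγ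
      exact Finset.mem_filter.2
        ⟨hγ.1, le_abs_norlundSum_of_lower_blocks_le hm hn hr hlog hγ.1 hγ.2⟩
  have hcard := Finset.card_le_card hgood
  have hsum := Finset.card_filter_add_card_filter_not (s := signShell N m)
    fun γ => 2 * 2 ^ m < |lower γ|
  omega

/-! ### Covering a finite group by signed translates -/

section Covering

variable {G : Type*} [Group G] [Fintype G] [DecidableEq G]

lemma exists_card_mul_card_le_card_filter (V E : Finset G) :
    ∃ t, V.card * E.card ≤ Fintype.card G * (V.filter fun x => x * t ∈ E).card := by
  have htranslates : ∀ x ∈ V, ∑ t : G, (if x * t ∈ E then 1 else 0) = E.card := fun x _ => by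
    rw [← Equiv.sum_comp (Equiv.mulLeft x⁻¹)]
    simp
  have hsum : ∑ t : G, (V.filter fun x => x * t ∈ E).card = V.card * E.card := by
    simp only [Finset.card_filter]
    rw [Finset.sum_comm, Finset.sum_congr rfl htranslates, Finset.sum_const, smul_eq_mul]
  obtain ⟨t, -, ht⟩ := Finset.exists_le_of_sum_le (s := (Finset.univ : Finset G))
    (f := fun _ => V.card * E.card)
    (g := fun t => Fintype.card G * (V.filter fun x => x * t ∈ E).card) Finset.univ_nonempty
    (by rw [Finset.sum_const, Finset.card_univ, smul_eq_mul, ← Finset.mul_sum, hsum])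
  exact ⟨t, ht⟩

lemma exists_card_le_and_card_uncovered_le_pow (E : Finset G) (M : ℕ) :
    ∃ T : Finset G, T.card ≤ M ∧ ((Finset.univ.filter fun x => ∀ t ∈ T, x * t ∉ E).card : ℝ) ≤
      (1 - E.card / Fintype.card G) ^ M * Fintype.card G := by
  have hG : (0 : ℝ) < Fintype.card G := by exact_mod_cast Fintype.card_pos
  have hE : (E.card : ℝ) / Fintype.card G ≤ 1 :=
    (div_le_one hG).2 (by exact_mod_cast Finset.card_le_univ E)
  induction M with
  | zero => exact ⟨∅, by simp, by simp⟩
  | succ M ih =>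
    obtain ⟨T, hT, hV⟩ := ih
    set V := Finset.univ.filter fun x => ∀ t ∈ T, x * t ∉ E with hVdef
    obtain ⟨t, ht⟩ := exists_card_mul_card_le_card_filter V E
    have hinsert : Finset.univ.filter (fun x => ∀ t' ∈ insert t T, x * t' ∉ E) =
        V.filter fun x => x * t ∉ E := by
      ext x
      simp [hVdef, and_comm]
    have hsplit : ((V.filter fun x => x * t ∈ E).card : ℝ) + (V.filter fun x => x * t ∉ E).card =
        V.card := by exact_mod_cast Finset.card_filter_add_card_filter_not fun x => x * t ∈ E
    have hcaught : (V.card : ℝ) * E.card / Fintype.card G ≤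
        (V.filter fun x => x * t ∈ E).card := (div_le_iff₀' hG).2 (by exact_mod_cast ht)
    refine ⟨insert t T, (Finset.card_insert_le _ _).trans (Nat.succ_le_succ hT), ?_⟩
    calc ((Finset.univ.filter fun x => ∀ t' ∈ insert t T, x * t' ∉ E).card : ℝ)
        ≤ V.card - V.card * E.card / Fintype.card G := by rw [hinsert]; linarith
      _ = (1 - E.card / Fintype.card G) * V.card := by ring
      _ ≤ (1 - E.card / Fintype.card G) *
          ((1 - E.card / Fintype.card G) ^ M * Fintype.card G) :=
          mul_le_mul_of_nonneg_left hV (by linarith)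
      _ = (1 - E.card / Fintype.card G) ^ (M + 1) * Fintype.card G := by ring

lemma one_sub_pow_le_half {p : ℝ} {M : ℕ} (hp : p ≤ 1) (hM : 1 ≤ M * p) :
    (1 - p) ^ M ≤ 1 / 2 :=
  calc (1 - p) ^ M ≤ Real.exp (-p) ^ M :=
        pow_le_pow_left₀ (by linarith) (Real.one_sub_le_exp_neg p) M
    _ = Real.exp (-(M * p)) := by rw [← Real.exp_nat_mul, mul_neg]
    _ ≤ Real.exp (-1) := Real.exp_le_exp.2 (neg_le_neg hM)
    _ ≤ 1 / 2 := by
        rw [Real.exp_neg, ← one_div]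
        exact one_div_le_one_div_of_le two_pos (by linarith [Real.add_one_le_exp (1 : ℝ)])

lemma exists_card_le_and_two_mul_card_uncovered_le (E : Finset G) {M : ℕ}
    (hM : Fintype.card G ≤ M * E.card) :
    ∃ T : Finset G, T.card ≤ M ∧
      2 * (Finset.univ.filter fun x => ∀ t ∈ T, x * t ∉ E).card ≤ Fintype.card G := by
  obtain ⟨T, hT, huncovered⟩ := exists_card_le_and_card_uncovered_le_pow E M
  have hG : (0 : ℝ) < Fintype.card G := by exact_mod_cast Fintype.card_pos
  have hhalf : (1 - (E.card : ℝ) / Fintype.card G) ^ M ≤ 1 / 2 := by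
    refine one_sub_pow_le_half ((div_le_one hG).2 (by exact_mod_cast Finset.card_le_univ E)) ?_
    rw [← mul_div_assoc, one_le_div hG]
    exact_mod_cast hM
  refine ⟨T, hT, ?_⟩
  have hreal : (2 : ℝ) * (Finset.univ.filter fun x => ∀ t ∈ T, x * t ∉ E).card ≤
      Fintype.card G := by
    linarith [mul_le_mul_of_nonneg_right hhalf hG.le]
  exact_mod_cast hreal

end Covering

section RandomSigns

variable {ι : Type*}

lemma abs_le_max_abs_sum_update_neg [DecidableEq ι] (T : Finset ι) (a : ι → ℝ) {i : ι} (hi : i ∈ T)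
    (ε : ι → ℤˣ) :
    |a i| ≤ max |∑ t ∈ T, ((ε t : ℤ) : ℝ) * a t|
      |∑ t ∈ T, ((Function.update ε i (-ε i) t : ℤ) : ℝ) * a t| := by
  have hrest : ∑ t ∈ T.erase i, ((Function.update ε i (-ε i) t : ℤ) : ℝ) * a t =
      ∑ t ∈ T.erase i, ((ε t : ℤ) : ℝ) * a t :=
    Finset.sum_congr rfl fun t ht => by
      rw [Function.update_of_ne (Finset.ne_of_mem_erase ht)]
  have hunit : |((ε i : ℤ) : ℝ) * a i| = |a i| := by
    rcases Int.units_eq_one_or (ε i) with h | h <;> simp [h]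
  rw [← Finset.add_sum_erase T (fun t => ((ε t : ℤ) : ℝ) * a t) hi,
    ← Finset.add_sum_erase T (fun t => ((Function.update ε i (-ε i) t : ℤ) : ℝ) * a t) hi, hrest,
    Function.update_self, Units.val_neg, Int.cast_neg, neg_mul, ← hunit]
  generalize ((ε i : ℤ) : ℝ) * a i = u, ∑ t ∈ T.erase i, ((ε t : ℤ) : ℝ) * a t = R
  have htriangle : |(u + R) - (-u + R)| ≤ |u + R| + |-u + R| := abs_sub _ _
  rw [show (u + R) - (-u + R) = 2 * u by ring, abs_mul, abs_two] at htriangle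
  linarith [le_max_left |u + R| |-u + R|, le_max_right |u + R| |-u + R|]

lemma card_le_two_mul_card_signs [Fintype ι] [DecidableEq ι] (T : Finset ι) (a : ι → ℝ) {i : ι}
    (hi : i ∈ T) {lam : ℝ} (hlam : lam ≤ |a i|) :
    Fintype.card (ι → ℤˣ) ≤ 2 * (Finset.univ.filter fun ε : ι → ℤˣ =>
      lam ≤ |∑ t ∈ T, ((ε t : ℤ) : ℝ) * a t|).card := by
  have hinvol : Function.Involutive fun ε : ι → ℤˣ => Function.update ε i (-ε i) :=
    fun ε => by simp
  have hflip : (Finset.univ.filter fun ε : ι → ℤˣ =>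
      ¬ lam ≤ |∑ t ∈ T, ((ε t : ℤ) : ℝ) * a t|).card ≤ (Finset.univ.filter fun ε : ι → ℤˣ =>
        lam ≤ |∑ t ∈ T, ((ε t : ℤ) : ℝ) * a t|).card := by
    refine Finset.card_le_card_of_injOn _ (fun ε hε => ?_) hinvol.injective.injOn
    simp only [Finset.coe_filter, Finset.mem_univ, true_and, Set.mem_ofPred_eq] at hε ⊢
    exact (le_max_iff.1 (hlam.trans (abs_le_max_abs_sum_update_neg T a hi ε))).resolve_left hε
  have hsplit := Finset.card_filter_add_card_filter_not (s := (Finset.univ : Finset (ι → ℤˣ)))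
    fun ε => lam ≤ |∑ t ∈ T, ((ε t : ℤ) : ℝ) * a t|
  rw [Finset.card_univ] at hsplit
  omega

lemma exists_signs_card_le_two_mul_card [Finite ι] {X : Type*} [Fintype X] (T : Finset ι)
    (a : X → ι → ℝ) (lam : ℝ) :
    ∃ ε : ι → ℤˣ, (Finset.univ.filter fun x => ∃ t ∈ T, lam ≤ |a x t|).card ≤
      2 * (Finset.univ.filter fun x => lam ≤ |∑ t ∈ T, ((ε t : ℤ) : ℝ) * a x t|).card := by
  classical
  have := Fintype.ofFinite ι
  set C := Finset.univ.filter fun x => ∃ t ∈ T, lam ≤ |a x t|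
  have hswap : ∑ ε : ι → ℤˣ, (Finset.univ.filter fun x =>
        lam ≤ |∑ t ∈ T, ((ε t : ℤ) : ℝ) * a x t|).card =
      ∑ x, (Finset.univ.filter fun ε : ι → ℤˣ =>
        lam ≤ |∑ t ∈ T, ((ε t : ℤ) : ℝ) * a x t|).card := by
    simp only [Finset.card_filter]
    exact Finset.sum_comm
  have hpoint : ∀ x ∈ C, Fintype.card (ι → ℤˣ) ≤ 2 * (Finset.univ.filter fun ε : ι → ℤˣ =>
      lam ≤ |∑ t ∈ T, ((ε t : ℤ) : ℝ) * a x t|).card := fun x hx => by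
    obtain ⟨t, ht, hlam⟩ := (Finset.mem_filter.1 hx).2
    exact card_le_two_mul_card_signs T (a x) ht hlam
  have haverage : ∑ _ε : ι → ℤˣ, C.card ≤ ∑ ε : ι → ℤˣ, 2 * (Finset.univ.filter fun x =>
      lam ≤ |∑ t ∈ T, ((ε t : ℤ) : ℝ) * a x t|).card :=
    calc ∑ _ε : ι → ℤˣ, C.card = ∑ _x ∈ C, Fintype.card (ι → ℤˣ) := by
          rw [Finset.sum_const, Finset.sum_const, Finset.card_univ, smul_eq_mul, smul_eq_mul,
            mul_comm]
      _ ≤ ∑ x ∈ C, 2 * (Finset.univ.filter fun ε : ι → ℤˣ =>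
          lam ≤ |∑ t ∈ T, ((ε t : ℤ) : ℝ) * a x t|).card := Finset.sum_le_sum hpoint
      _ ≤ _ := by
          rw [← Finset.mul_sum, ← Finset.mul_sum, hswap]
          exact Nat.mul_le_mul_left _ (Finset.sum_le_sum_of_subset (Finset.subset_univ C))
  obtain ⟨ε, -, hε⟩ := Finset.exists_le_of_sum_le Finset.univ_nonempty haverage
  exact ⟨ε, hε⟩

end RandomSigns

lemma exists_signed_cover {G : Type*} [Group G] [Fintype G] (h : G → ℝ) (lam : ℝ)
    {M : ℕ} (hM : Fintype.card G ≤ M * (Finset.univ.filter fun x => lam ≤ |h x|).card) :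
    ∃ (T : Finset G) (ε : G → ℤˣ), T.card ≤ M ∧ Fintype.card G ≤ 4 * (Finset.univ.filter fun x =>
      lam ≤ |∑ t ∈ T, ((ε t : ℤ) : ℝ) * h (x * t)|).card := by
  classical
  obtain ⟨T, hT, huncovered⟩ := exists_card_le_and_two_mul_card_uncovered_le _ hM
  obtain ⟨ε, hε⟩ := exists_signs_card_le_two_mul_card T (fun x t => h (x * t)) lam
  refine ⟨T, ε, hT, ?_⟩
  have hsplit := Finset.card_filter_add_card_filter_not (s := (Finset.univ : Finset G))
    fun x => ∀ t ∈ T, x * t ∉ Finset.univ.filter fun x => lam ≤ |h x|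
  simp only [Finset.mem_filter, Finset.mem_univ, true_and, not_forall, exists_prop, not_not]
    at hsplit huncovered
  rw [Finset.card_univ] at hsplit
  omega

/-! ### The size of the Nörlund kernel along the indices `p_A` -/

lemma logSum_add_one_eq_harmonic (n : ℕ) : logSum (n + 1) = (harmonic n : ℝ) := by
  rw [harmonic_eq_sum_Icc, logSum]
  simp

lemma logSum_pos {n : ℕ} (hn : 2 ≤ n) : 0 < logSum n :=
  calc 0 < logSum 2 := by norm_num [logSum]
    _ ≤ logSum n := logSum_mono hn

lemma one_le_log_four : 1 ≤ Real.log 4 := by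
  rw [show (4 : ℝ) = 2 ^ 2 by norm_num, Real.log_pow, Nat.cast_ofNat]
  linarith [Real.log_two_gt_d9]

lemma three_mul_sum_range_four_pow_add_one (ν : ℕ) :
    3 * ∑ k ∈ Finset.range ν, 4 ^ k + 1 = 4 ^ ν := by
  rw [mul_comm]
  exact geom_sum_mul_add 3 ν

lemma pIdx_lt (A : ℕ) : pIdx A < 4 ^ (A + 1) := by
  have hgeom := three_mul_sum_range_four_pow_add_one (A + 1)
  rw [pIdx]
  omega

lemma four_pow_le_pIdx (A : ℕ) : 4 ^ A ≤ pIdx A :=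
  Finset.single_le_sum (f := (4 ^ ·)) (fun _ _ => Nat.zero_le _) (Finset.self_mem_range_succ A)

lemma pIdx_eq_add {A ν : ℕ} (h : ν ≤ A) :
    pIdx A = 2 ^ (2 * ν + 1) * (2 * ∑ i ∈ Finset.range (A - ν), 4 ^ i) + 2 ^ (2 * ν) +
      ∑ k ∈ Finset.range ν, 4 ^ k := by
  have hpow : ∀ i, 2 ^ (2 * ν + 1) * (2 * 4 ^ i) = 4 ^ (ν + 1 + i) := fun i => by
    rw [pow_succ, pow_mul, pow_add, pow_succ]
    ring
  rw [pIdx, show A + 1 = ν + 1 + (A - ν) by omega, Finset.sum_range_add, Finset.sum_range_succ,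
    Finset.mul_sum, Finset.mul_sum, Finset.sum_congr rfl fun i _ => hpow i, pow_mul]
  ring

lemma sub_one_mul_log_four_le_logSum {ν : ℕ} (hν : 1 ≤ ν) :
    ((ν : ℝ) - 1) * Real.log 4 ≤ logSum (∑ k ∈ Finset.range ν, 4 ^ k + 1) := by
  set r := ∑ k ∈ Finset.range ν, 4 ^ k with hr
  obtain ⟨μ, rfl⟩ := Nat.exists_eq_add_of_le' hν
  have hpow : 4 ^ μ ≤ r + 1 := by
    rw [hr, Finset.sum_range_succ]
    omega
  calc (((μ + 1 : ℕ) : ℝ) - 1) * Real.log 4 = Real.log (4 ^ μ) := by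
        rw [Real.log_pow, Nat.cast_add_one, add_sub_cancel_right]
    _ ≤ Real.log ((r + 1 : ℕ) : ℝ) := Real.log_le_log (by positivity) (by exact_mod_cast hpow)
    _ ≤ logSum (r + 1) := by
        rw [logSum_add_one_eq_harmonic]
        exact_mod_cast log_add_one_le_harmonic r

lemma logSum_pIdx_le (A : ℕ) : logSum (pIdx A) ≤ (A + 2) * Real.log 4 := by
  calc logSum (pIdx A) ≤ logSum (4 ^ (A + 1) + 1) := logSum_mono (by have := pIdx_lt A; omega)
    _ ≤ 1 + Real.log ((4 ^ (A + 1) : ℕ) : ℝ) := by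
        rw [logSum_add_one_eq_harmonic]
        exact_mod_cast harmonic_le_one_add_log _
    _ = 1 + (A + 1) * Real.log 4 := by push_cast; rw [Real.log_pow, Nat.cast_add_one]
    _ ≤ (A + 2) * Real.log 4 := by linarith [one_le_log_four]

/-- The Nörlund logarithmic kernel `F_n`, as a function of the signs of the first `N` Rademacher
functions; these determine it when `n ≤ 2^N`. -/
def norlundKernel (n : ℕ) {N : ℕ} (γ : SignVec N) : ℝ := norlundSum n (signSeq γ) / logSum n

/-- The part of the shell `signShell (2 A + 2) (2 ν)` on which `F_{p_A}` is as large as `c 4^ν`. -/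
def kernelShell (c : ℝ) (A ν : ℕ) : Finset (SignVec (2 * A + 2)) :=
  (signShell (2 * A + 2) (2 * ν)).filter fun γ => c * 4 ^ ν ≤ |norlundKernel (pIdx A) γ|

lemma le_abs_norlundKernel_of_mem_kernelShell {c : ℝ} {A ν : ℕ} {γ : SignVec (2 * A + 2)}
    (hγ : γ ∈ kernelShell c A ν) : c * 4 ^ ν ≤ |norlundKernel (pIdx A) γ| :=
  (Finset.mem_filter.1 hγ).2

lemma disjoint_kernelShell (c : ℝ) {A ν ν' : ℕ} (hν : ν ≤ A) (hν' : ν' ≤ A) (hne : ν ≠ ν') :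
    Disjoint (kernelShell c A ν) (kernelShell c A ν') :=
  Finset.disjoint_filter_filter (disjoint_signShell (by omega) (by omega) (by omega))

lemma four_pow_le_card_kernelShell {c : ℝ} {A ν : ℕ} (hA : 1 ≤ A) (hν : ν ≤ A)
    (hlog : 8 ≤ logSum (∑ k ∈ Finset.range ν, 4 ^ k + 1))
    (hc : 4 * c * logSum (pIdx A) ≤ logSum (∑ k ∈ Finset.range ν, 4 ^ k + 1)) :
    4 ^ (A - ν) ≤ (kernelShell c A ν).card := by
  set r := ∑ k ∈ Finset.range ν, 4 ^ k
  have hlogSum : 0 < logSum (pIdx A) := logSum_pos <| by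
    have : 4 ^ 1 ≤ 4 ^ A := Nat.pow_le_pow_right (by norm_num) hA
    have := four_pow_le_pIdx A
    omega
  have hr_le : 2 * r ≤ 2 ^ (2 * ν) := by
    have := three_mul_sum_range_four_pow_add_one ν
    rw [pow_mul]
    norm_num only
    omega
  have hpIdx : pIdx A ≤ 2 ^ (2 * A + 2) := by
    rw [show 2 * A + 2 = 2 * (A + 1) by ring, pow_mul]
    exact (pIdx_lt A).le
  have hsubset : ((signShell (2 * A + 2) (2 * ν)).filter fun γ =>
      2 ^ (2 * ν) / 4 * logSum (r + 1) ≤ |norlundSum (pIdx A) (signSeq γ)|) ⊆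
        kernelShell c A ν := by
    refine Finset.monotone_filter_right _ fun γ _ hγ => ?_
    rw [norlundKernel, abs_div, abs_of_pos hlogSum, le_div_iff₀ hlogSum]
    calc c * 4 ^ ν * logSum (pIdx A) = 4 ^ ν / 4 * (4 * c * logSum (pIdx A)) := by ring
      _ ≤ 4 ^ ν / 4 * logSum (r + 1) := by gcongr
      _ = 2 ^ (2 * ν) / 4 * logSum (r + 1) := by rw [pow_mul]; norm_num
      _ ≤ |norlundSum (pIdx A) (signSeq γ)| := hγ
  have hshell := card_signShell_le_two_mul_card_filter (N := 2 * A + 2) (m := 2 * ν) (by omega)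
    (pIdx_eq_add hν) hr_le hlog hpIdx
  rw [card_signShell (by omega), show 2 * A + 2 - (2 * ν + 1) = 2 * (A - ν) + 1 by omega, pow_succ,
    pow_mul, mul_comm] at hshell
  exact (Nat.le_of_mul_le_mul_left hshell two_pos).trans (Finset.card_le_card hsubset)

/-- The constant `c` for which all the shells `K ≤ ν ≤ (b + 1) K` contain many points where
`F_{p_A}`, `A = (b + 1) K`, is as large as `c 4^ν`. -/
def kernelConst (b : ℕ) : ℝ := 1 / (8 * (b + 3))

lemma kernelConst_pos (b : ℕ) : 0 < kernelConst b := by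
  rw [kernelConst]
  positivity

lemma eight_le_logSum {ν : ℕ} (hν : 9 ≤ ν) : 8 ≤ logSum (∑ k ∈ Finset.range ν, 4 ^ k + 1) := by
  have hν' : (9 : ℝ) ≤ ν := by exact_mod_cast hν
  nlinarith [sub_one_mul_log_four_le_logSum (ν := ν) (by omega), one_le_log_four]

lemma four_mul_kernelConst_mul_logSum_pIdx_le (b : ℕ) {K ν : ℕ} (hK : 9 ≤ K) (hν : K ≤ ν) :
    4 * kernelConst b * logSum (pIdx ((b + 1) * K)) ≤
      logSum (∑ k ∈ Finset.range ν, 4 ^ k + 1) := by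
  have hK' : (9 : ℝ) ≤ K := by exact_mod_cast hK
  have hKν : (K : ℝ) ≤ ν := by exact_mod_cast hν
  have hlog := one_le_log_four
  calc 4 * kernelConst b * logSum (pIdx ((b + 1) * K))
      ≤ 4 * kernelConst b * ((((b + 1) * K : ℕ) + 2) * Real.log 4) :=
        mul_le_mul_of_nonneg_left (logSum_pIdx_le _) (by linarith [kernelConst_pos b])
    _ = ((b + 1) * K + 2) / (2 * (b + 3)) * Real.log 4 := by
        rw [kernelConst]
        push_cast
        field_simp
        ring
    _ ≤ (ν - 1) * Real.log 4 := by
        refine mul_le_mul_of_nonneg_right ?_ (by linarith)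
        rw [div_le_iff₀ (by positivity)]
        nlinarith [(b.cast_nonneg : (0 : ℝ) ≤ b)]
    _ ≤ _ := sub_one_mul_log_four_le_logSum (by omega)

lemma four_pow_le_card_kernelShell_kernelConst {b K ν : ℕ} (hK : 9 ≤ K) (hKν : K ≤ ν)
    (hν : ν ≤ (b + 1) * K) :
    4 ^ ((b + 1) * K - ν) ≤ (kernelShell (kernelConst b) ((b + 1) * K) ν).card :=
  four_pow_le_card_kernelShell (by omega) hν (eight_le_logSum (by omega))
    (four_mul_kernelConst_mul_logSum_pIdx_le b hK hKν)

lemma card_biUnion_piFinset {ι κ α : Type*} [Fintype ι] [DecidableEq ι] [DecidableEq α]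
    {V : Finset (ι → κ)} {J : κ → Finset α}
    (hJ : ∀ v ∈ V, ∀ w ∈ V, ∀ i, v i ≠ w i → Disjoint (J (v i)) (J (w i))) :
    (V.biUnion fun v => Fintype.piFinset fun i => J (v i)).card =
      ∑ v ∈ V, ∏ i, (J (v i)).card := by
  rw [Finset.card_biUnion fun v hv w hw hne => ?_]
  · simp only [Fintype.card_piFinset]
  · obtain ⟨i, hi⟩ := Function.ne_iff.1 hne
    exact Fintype.piFinset_disjoint_of_disjoint _ _ (hJ v hv w hw i hi)

section CompleteToSum

variable {ι : Type*} [DecidableEq ι] {i₀ : ι}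

/-- The extension of `w` to the coordinate `i₀` whose sum is `S`, provided that `w` sums to at most
`S`; otherwise truncated subtraction makes the new coordinate `0`. -/
def completeToSum [Fintype ι] (S : ℕ) (w : {i // i ≠ i₀} → ℕ) (i : ι) : ℕ :=
  if h : i ≠ i₀ then w ⟨i, h⟩ else S - ∑ j, w j

variable [Fintype ι] (S : ℕ) (w : {i // i ≠ i₀} → ℕ)

lemma completeToSum_coe (j : {i // i ≠ i₀}) : completeToSum S w j = w j :=
  dif_pos j.2

lemma completeToSum_self : completeToSum S w i₀ = S - ∑ j, w j :=
  dif_neg (not_not.2 rfl)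

lemma completeToSum_injective :
    Function.Injective (completeToSum S : ({i // i ≠ i₀} → ℕ) → ι → ℕ) := fun w w' h =>
  funext fun j => by rw [← completeToSum_coe S w, h, completeToSum_coe]

lemma sum_completeToSum {S : ℕ} (hw : ∑ j, w j ≤ S) : ∑ i, completeToSum S w i = S := by
  rw [Fintype.sum_eq_add_sum_subtype_ne _ i₀, completeToSum_self]
  simp only [completeToSum_coe]
  exact Nat.sub_add_cancel hw

end CompleteToSum

lemma exists_finset_levels {ι : Type*} [Fintype ι] [Nonempty ι] (K : ℕ) :
    ∃ V : Finset (ι → ℕ), V.card = K ^ (Fintype.card ι - 1) ∧ ∀ v ∈ V,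
      ∑ i, v i = 2 * Fintype.card ι * K ∧ ∀ i, K ≤ v i ∧ v i ≤ (Fintype.card ι + 1) * K := by
  classical
  obtain ⟨i₀⟩ := ‹Nonempty ι›
  obtain ⟨b, hb⟩ : ∃ b, Fintype.card ι = b + 1 :=
    Nat.exists_eq_add_of_le' (Fintype.card_pos_iff.2 ⟨i₀⟩)
  have hcard : Fintype.card {i : ι // i ≠ i₀} = b := by
    rw [Fintype.card_subtype_compl, hb, Fintype.card_subtype_eq, Nat.add_sub_cancel]
  refine ⟨(Fintype.piFinset fun _ : {i // i ≠ i₀} => Finset.Ico K (2 * K)).image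
    (completeToSum (2 * (b + 1) * K)), ?_, Finset.forall_mem_image.2 fun w hw => ?_⟩
  · rw [Finset.card_image_of_injective _ (completeToSum_injective _), Fintype.card_piFinset,
      Finset.prod_const, Finset.card_univ, Nat.card_Ico, hcard, hb, two_mul, Nat.add_sub_cancel,
      Nat.add_sub_cancel]
  have hmem (j) : K ≤ w j ∧ w j < 2 * K := Finset.mem_Ico.1 (Fintype.mem_piFinset.1 hw j)
  have hlower : b * K ≤ ∑ j, w j := by
    rw [← hcard, ← smul_eq_mul, ← Finset.card_univ]
    exact Finset.card_nsmul_le_sum _ _ _ fun j _ => (hmem j).1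
  have hupper : ∑ j, w j ≤ 2 * (b * K) := by
    rw [mul_left_comm, ← hcard, ← smul_eq_mul, ← Finset.card_univ]
    exact Finset.sum_le_card_nsmul _ _ _ fun j _ => (hmem j).2.le
  have hsum : 2 * (b + 1) * K = 2 * (b * K) + 2 * K := by ring
  have hmax : (b + 1 + 1) * K = b * K + 2 * K := by ring
  rw [hb]
  refine ⟨sum_completeToSum w (by omega), fun i => ?_⟩
  rcases eq_or_ne i i₀ with rfl | hi
  · rw [completeToSum_self]
    omega
  · have := hmem ⟨i, hi⟩
    rw [completeToSum_coe _ w ⟨i, hi⟩]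
    omega

lemma le_card_filter_le_abs_prod_norlundKernel {ι : Type*} [Fintype ι] [DecidableEq ι]
    [Nonempty ι] {b K : ℕ} (hb : Fintype.card ι = b) (hK : 9 ≤ K) :
    K ^ (b - 1) * 4 ^ (b * ((b + 1) * K) - 2 * b * K) ≤
      (Finset.univ.filter fun y : ι → SignVec (2 * ((b + 1) * K) + 2) =>
        kernelConst b ^ b * 4 ^ (2 * b * K) ≤
          |∏ i, norlundKernel (pIdx ((b + 1) * K)) (y i)|).card := by
  set A := (b + 1) * K
  obtain ⟨V, hVcard, hV⟩ := exists_finset_levels (ι := ι) K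
  rw [hb] at hVcard hV
  set J := kernelShell (kernelConst b) A
  have hdisjoint : ∀ v ∈ V, ∀ w ∈ V, ∀ i, v i ≠ w i → Disjoint (J (v i)) (J (w i)) :=
    fun v hv w hw i => disjoint_kernelShell _ ((hV v hv).2 i).2 ((hV w hw).2 i).2
  have hbox : ∀ v ∈ V, 4 ^ (b * A - 2 * b * K) ≤ ∏ i, (J (v i)).card := fun v hv =>
    calc 4 ^ (b * A - 2 * b * K) = ∏ i, 4 ^ (A - v i) := by
          rw [Finset.prod_pow_eq_pow_sum, Finset.sum_tsub_distrib _ fun i _ => ((hV v hv).2 i).2,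
            (hV v hv).1, Finset.sum_const, Finset.card_univ, hb, smul_eq_mul]
      _ ≤ ∏ i, (J (v i)).card := Finset.prod_le_prod' fun i _ =>
          four_pow_le_card_kernelShell_kernelConst hK ((hV v hv).2 i).1 ((hV v hv).2 i).2
  calc K ^ (b - 1) * 4 ^ (b * A - 2 * b * K)
      ≤ (V.biUnion fun v => Fintype.piFinset fun i => J (v i)).card := by
        rw [card_biUnion_piFinset hdisjoint, ← hVcard, ← smul_eq_mul]
        exact Finset.card_nsmul_le_sum _ _ _ hbox
    _ ≤ _ := Finset.card_le_card fun y hy => Finset.mem_filter.2 ⟨Finset.mem_univ y, ?_⟩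
  obtain ⟨v, hv, hy⟩ := Finset.mem_biUnion.1 hy
  calc kernelConst b ^ b * 4 ^ (2 * b * K) = ∏ i, (kernelConst b * 4 ^ v i) := by
        rw [Finset.prod_mul_distrib, Finset.prod_pow_eq_pow_sum, (hV v hv).1, Finset.prod_const,
          Finset.card_univ, hb]
    _ ≤ ∏ i, |norlundKernel (pIdx A) (y i)| :=
        Finset.prod_le_prod (fun i _ => mul_nonneg (kernelConst_pos b).le (by positivity))
          fun i _ => le_abs_norlundKernel_of_mem_kernelShell (Fintype.mem_piFinset.1 hy i)
    _ = |∏ i, norlundKernel (pIdx A) (y i)| := (Finset.abs_prod _ _).symm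

/-! ### Operators bounded from `L¹` to the bounded functions -/

section BoundedOperators

variable {α : Type*} [MeasurableSpace α] {μ : Measure α}

/-- `T` is linear on integrable functions and bounded from `L¹(μ)` to the space of bounded functions
with norm at most `C`. The operators act on honest functions, so that their values at single points
make sense. -/
structure IsBoundedL1Linfty (μ : Measure α) (C : ℝ) (T : (α → ℝ) → α → ℝ) : Prop where
  nonneg : 0 ≤ C
  map_add {f g : α → ℝ} (hf : Integrable f μ) (hg : Integrable g μ) : T (f + g) = T f + T g
  map_smul (c : ℝ) (f : α → ℝ) : T (c • f) = c • T f
  abs_apply_le {f : α → ℝ} (hf : Integrable f μ) (x : α) : |T f x| ≤ C * ∫ y, |f y| ∂μ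

namespace IsBoundedL1Linfty

variable {C : ℝ} {T : (α → ℝ) → α → ℝ}

lemma map_zero (hT : IsBoundedL1Linfty μ C T) : T 0 = 0 := by
  simpa using hT.map_smul 0 0

lemma map_sum (hT : IsBoundedL1Linfty μ C T) {ι : Type*} {s : Finset ι} {f : ι → α → ℝ}
    (hf : ∀ i ∈ s, Integrable (f i) μ) : T (∑ i ∈ s, f i) = ∑ i ∈ s, T (f i) := by
  classical
  induction s using Finset.induction_on with
  | empty => exact hT.map_zero
  | insert i s hi ih =>
    have hs : ∀ j ∈ s, Integrable (f j) μ := fun j hj => hf j (Finset.mem_insert_of_mem hj)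
    rw [Finset.sum_insert hi, Finset.sum_insert hi,
      hT.map_add (hf i (Finset.mem_insert_self i s)) (integrable_finsetSum' s hs), ih hs]

lemma congr_ae (hT : IsBoundedL1Linfty μ C T) {f g : α → ℝ} (hf : Integrable f μ)
    (hg : Integrable g μ) (hfg : f =ᵐ[μ] g) : T f = T g := by
  have hzero : T (f - g) = 0 := by
    funext x
    have habs : ∫ y, |(f - g) y| ∂μ = 0 :=
      integral_eq_zero_of_ae (hfg.mono fun y hy => by simp [hy])
    have hle := hT.abs_apply_le (hf.sub hg) x
    rw [habs, mul_zero] at hle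
    exact abs_nonpos_iff.1 hle
  rw [← sub_add_cancel f g, hT.map_add (hf.sub hg) hg, hzero, zero_add]

end IsBoundedL1Linfty

/-- The integrable functions which the operators `T n` reproduce uniformly as `n → ∞`. -/
def uniformlyReproduced {C : ℕ → ℝ} {T : ℕ → (α → ℝ) → α → ℝ}
    (hT : ∀ n, IsBoundedL1Linfty μ (C n) (T n)) : Submodule ℝ (α → ℝ) where
  carrier := {f | Integrable f μ ∧ TendstoUniformly (fun n => T n f) f atTop}
  zero_mem' := ⟨integrable_zero _ _ _, by
    simp only [(hT _).map_zero]
    exact fun u hu => Eventually.of_forall fun _ _ => refl_mem_uniformity hu⟩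
  add_mem' := fun ⟨hf, hf'⟩ ⟨hg, hg'⟩ => ⟨hf.add hg, by
    simp only [(hT _).map_add hf hg]
    exact hf'.add hg'⟩
  smul_mem' := fun c f ⟨hf, hf'⟩ => ⟨hf.smul c, by
    simp only [(hT _).map_smul]
    exact (uniformContinuous_const_smul c).comp_tendstoUniformly hf'⟩

end BoundedOperators

/-! ### The diagonal mixed logarithmic means -/

section DiagLogMean

variable {d : ℕ}

/-- The `d`-dimensional Walsh function with index `J`. -/
def walshProd (J : Fin d → ℕ) (x : Fin d → ℝ) : ℝ := ∏ i, walsh (J i) (x i)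

lemma abs_walshProd (J : Fin d → ℕ) (x : Fin d → ℝ) : |walshProd J x| = 1 := by
  rw [walshProd, Finset.abs_prod]
  exact Finset.prod_eq_one fun i _ => abs_walsh _ _

lemma measurable_walshProd (J : Fin d → ℕ) : Measurable (walshProd J) :=
  Finset.measurable_prod _ fun i _ => (measurable_walsh _).comp (measurable_pi_apply i)

lemma integrable_walshProd (J : Fin d → ℕ) : Integrable (walshProd J) (cubeMeasure d) :=
  .of_bound (measurable_walshProd J).aestronglyMeasurable 1
    (Eventually.of_forall fun x => by rw [Real.norm_eq_abs, abs_walshProd])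

lemma integrable_mul_walshProd {f : (Fin d → ℝ) → ℝ} (hf : Integrable f (cubeMeasure d))
    (J : Fin d → ℕ) : Integrable (fun x => f x * walshProd J x) (cubeMeasure d) :=
  hf.mul_bdd (c := 1) (measurable_walshProd J).aestronglyMeasurable
    (Eventually.of_forall fun x => by rw [Real.norm_eq_abs, abs_walshProd])

lemma walshCoef_add {f g : (Fin d → ℝ) → ℝ} (hf : Integrable f (cubeMeasure d))
    (hg : Integrable g (cubeMeasure d)) (j : Fin d → ℕ) :
    walshCoef (f + g) j = walshCoef f j + walshCoef g j := by
  simp only [walshCoef, Pi.add_apply, add_mul]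
  exact integral_add (integrable_mul_walshProd hf j) (integrable_mul_walshProd hg j)

lemma walshCoef_smul (c : ℝ) (f : (Fin d → ℝ) → ℝ) (j : Fin d → ℕ) :
    walshCoef (c • f) j = c * walshCoef f j := by
  simp only [walshCoef, Pi.smul_apply, smul_eq_mul, mul_assoc]
  exact integral_const_mul _ _

lemma abs_walshCoef_le (f : (Fin d → ℝ) → ℝ) (j : Fin d → ℕ) :
    |walshCoef f j| ≤ ∫ x, |f x| ∂cubeMeasure d := by
  refine abs_integral_le_integral_abs.trans_eq (integral_congr_ae (.of_forall fun x => ?_))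
  exact (abs_mul _ _).trans (by rw [← walshProd, abs_walshProd, mul_one])

lemma walshCoef_walshProd (J j : Fin d → ℕ) :
    walshCoef (walshProd J) j = ∏ i, if J i = j i then 1 else 0 := by
  simp only [walshCoef, walshProd, ← Finset.prod_mul_distrib, cubeMeasure_eq_pi]
  rw [integral_fintype_prod_eq_prod fun i u => walsh (J i) u * walsh (j i) u]
  exact Finset.prod_congr rfl fun i _ => integral_walsh_mul_walsh _ _

lemma rectPartialSum_walshProd (J N : Fin d → ℕ) (x : Fin d → ℝ) :
    rectPartialSum (walshProd J) N x = ∏ i, if J i < N i then walsh (J i) (x i) else 0 := by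
  simp only [rectPartialSum, walshCoef_walshProd, ← Finset.prod_mul_distrib]
  rw [← Finset.prod_univ_sum (fun i => Finset.range (N i))
    fun i k => (if J i = k then (1 : ℝ) else 0) * walsh k (x i)]
  exact Finset.prod_congr rfl fun i _ => by simp [ite_mul]

/-- The mixed mean `L_{n(B)} ∘ R_{n(B')}` whose index vectors have all coordinates equal to `n`. -/
def diagLogMean (B : Finset (Fin d)) (n : ℕ) (f : (Fin d → ℝ) → ℝ) (x : Fin d → ℝ) : ℝ :=
  mixedLogMean B f (fun _ => n) x

/-- The bound for the norm of `diagLogMean B n` from `L¹` to the bounded functions that results from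
estimating every Walsh function by `1`. -/
def diagLogMeanBound (B : Finset (Fin d)) (n : ℕ) : ℝ :=
  |(∏ _j : Fin d, logSum n)⁻¹| * ∑ i ∈ Fintype.piFinset fun _ : Fin d => Finset.Ico 1 n,
    (Fintype.piFinset fun k => Finset.range (if k ∈ B then n - i k else i k)).card /
      |∏ j, (i j : ℝ)|

lemma abs_rectPartialSum_le (f : (Fin d → ℝ) → ℝ) (N : Fin d → ℕ) (x : Fin d → ℝ) :
    |rectPartialSum f N x| ≤
      (Fintype.piFinset fun i => Finset.range (N i)).card * ∫ y, |f y| ∂cubeMeasure d := by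
  rw [← nsmul_eq_mul]
  refine (Finset.abs_sum_le_sum_abs _ _).trans (Finset.sum_le_card_nsmul _ _ _ fun j _ => ?_)
  rw [abs_mul, ← walshProd, abs_walshProd, mul_one]
  exact abs_walshCoef_le f j

lemma isBoundedL1Linfty_diagLogMean (B : Finset (Fin d)) (n : ℕ) :
    IsBoundedL1Linfty (cubeMeasure d) (diagLogMeanBound B n) (diagLogMean B n) where
  nonneg := mul_nonneg (abs_nonneg _) (Finset.sum_nonneg fun i _ => by positivity)
  map_add hf hg := by
    funext x
    simp only [diagLogMean, mixedLogMean, rectPartialSum, walshCoef_add hf hg, add_mul,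
      Finset.sum_add_distrib, add_div, mul_add, Pi.add_apply]
  map_smul c f := by
    funext x
    simp only [diagLogMean, mixedLogMean, rectPartialSum, walshCoef_smul, mul_assoc,
      ← Finset.mul_sum, mul_div_assoc, Pi.smul_apply, smul_eq_mul]
    ring
  abs_apply_le {f} _ x := by
    rw [diagLogMean, mixedLogMean, abs_mul, diagLogMeanBound, mul_assoc, Finset.sum_mul]
    refine mul_le_mul_of_nonneg_left ((Finset.abs_sum_le_sum_abs _ _).trans ?_) (abs_nonneg _)
    refine Finset.sum_le_sum fun i _ => ?_
    rw [abs_div, div_mul_eq_mul_div]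
    exact div_le_div_of_nonneg_right (abs_rectPartialSum_le f _ x) (abs_nonneg _)

lemma logSum_eq_sum_Ico (n : ℕ) : logSum n = ∑ k ∈ Finset.Ico 1 n, (1 : ℝ) / k :=
  Finset.sum_congr (by ext k; simp only [Finset.mem_Icc, Finset.mem_Ico]; omega) fun _ _ => rfl

lemma sum_Ico_ite_lt_sub_div (n j : ℕ) (w : ℝ) :
    ∑ k ∈ Finset.Ico 1 n, (if j < n - k then w else 0) / k = logSum (n - j) * w := by
  rw [logSum_eq_sum_Ico, Finset.sum_mul]
  symm
  rw [← Finset.sum_subset (Finset.Ico_subset_Ico_right (Nat.sub_le n j)) fun k hk hk' => ?_]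
  · refine Finset.sum_congr rfl fun k hk => ?_
    rw [Finset.mem_Ico] at hk
    rw [if_pos (by omega)]
    ring
  · simp only [Finset.mem_Ico] at hk hk'
    rw [if_neg (by omega), zero_div]

lemma sum_Ico_ite_pos_div (n : ℕ) (w : ℝ) :
    ∑ k ∈ Finset.Ico 1 n, (if 0 < k then w else 0) / k = logSum n * w := by
  rw [logSum_eq_sum_Ico, Finset.sum_mul]
  refine Finset.sum_congr rfl fun k hk => ?_
  rw [if_pos (Nat.succ_le_iff.1 (Finset.mem_Ico.1 hk).1)]
  ring

lemma diagLogMean_walshProd {B : Finset (Fin d)} {n : ℕ} (hn : 2 ≤ n) {J : Fin d → ℕ}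
    (hJ : ∀ i ∉ B, J i = 0) :
    diagLogMean B n (walshProd J) = (∏ i ∈ B, logSum (n - J i) / logSum n) • walshProd J := by
  funext x
  have hfactor (i : Fin d) : (logSum n)⁻¹ * ∑ k ∈ Finset.Ico 1 n,
      (if J i < (if i ∈ B then n - k else k) then walsh (J i) (x i) else 0) / (k : ℝ) =
        (if i ∈ B then logSum (n - J i) / logSum n else 1) * walsh (J i) (x i) := by
    split_ifs with hi
    · rw [sum_Ico_ite_lt_sub_div, div_eq_inv_mul, mul_assoc]
    · rw [hJ i hi, sum_Ico_ite_pos_div, inv_mul_cancel_left₀ (logSum_pos hn).ne', one_mul]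
  simp only [diagLogMean, mixedLogMean, rectPartialSum_walshProd, ← Finset.prod_div_distrib]
  rw [← Finset.prod_univ_sum (fun _ => Finset.Ico 1 n) fun i k =>
      (if J i < (if i ∈ B then n - k else k) then walsh (J i) (x i) else 0) / (k : ℝ),
    ← Finset.prod_inv_distrib, ← Finset.prod_mul_distrib,
    Finset.prod_congr rfl fun i _ => hfactor i, Finset.prod_mul_distrib,
    Finset.prod_ite_mem, Finset.univ_inter]
  rfl

lemma tendsto_logSum : Tendsto logSum atTop atTop := by
  rw [← tendsto_add_atTop_iff_nat 1]
  refine tendsto_atTop_mono (fun n => ?_)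
    (Real.tendsto_log_atTop.comp (tendsto_natCast_atTop_atTop.comp (tendsto_add_atTop_nat 1)))
  rw [logSum_add_one_eq_harmonic]
  exact log_add_one_le_harmonic n

lemma tendsto_logSum_sub_div_logSum (j : ℕ) :
    Tendsto (fun n => logSum (n - j) / logSum n) atTop (nhds 1) := by
  have hlower : Tendsto (fun n => 1 - j / logSum n) atTop (nhds 1) := by
    simpa using (tendsto_logSum.const_div_atTop (j : ℝ)).const_sub 1
  refine tendsto_of_tendsto_of_tendsto_of_le_of_le' hlower tendsto_const_nhds ?_ ?_
  · filter_upwards [eventually_ge_atTop (j + 2)] with n hn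
    have hpos : 0 < logSum n := logSum_pos (by omega)
    have hdiff : logSum n - logSum (n - j) ≤ j :=
      calc logSum n - logSum (n - j) ≤ j / ((n - j : ℕ) : ℝ) := by
            simpa only [Nat.sub_add_cancel (by omega : j ≤ n)] using
              logSum_add_sub_le (n := n - j) (by omega) j
        _ ≤ j := div_le_self j.cast_nonneg (by exact_mod_cast (by omega : 1 ≤ n - j))
    rw [le_div_iff₀ hpos, sub_mul, div_mul_cancel₀ _ hpos.ne', one_mul]
    linarith
  · filter_upwards with n
    exact div_le_one_of_le₀ (logSum_mono (Nat.sub_le n j)) (logSum_nonneg n)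

lemma walshProd_mem_uniformlyReproduced {B : Finset (Fin d)} {J : Fin d → ℕ}
    (hJ : ∀ i ∉ B, J i = 0) :
    walshProd J ∈ uniformlyReproduced (isBoundedL1Linfty_diagLogMean B) := by
  refine ⟨integrable_walshProd J, Metric.tendstoUniformly_iff.2 fun ε hε => ?_⟩
  have hratio : Tendsto (fun n => ∏ i ∈ B, logSum (n - J i) / logSum n) atTop (nhds 1) := by
    simpa using tendsto_finsetProd B fun i _ => tendsto_logSum_sub_div_logSum (J i)
  filter_upwards [hratio.eventually (Metric.ball_mem_nhds 1 hε), eventually_ge_atTop 2]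
    with n hdist hn x
  rw [diagLogMean_walshProd hn hJ, Pi.smul_apply, smul_eq_mul, Real.dist_eq, abs_sub_comm,
    ← sub_one_mul, abs_mul, abs_walshProd, mul_one]
  exact hdist

lemma extend_val_eq_zero {B : Finset (Fin d)} (J : B → ℕ) (i : Fin d) (hi : i ∉ B) :
    Function.extend Subtype.val J 0 i = 0 :=
  Function.extend_apply' (f := Subtype.val) J 0 i fun ⟨j, hj⟩ => hi (hj ▸ j.2)

lemma walshProd_extend {B : Finset (Fin d)} (J : B → ℕ) (x : Fin d → ℝ) :
    walshProd (Function.extend Subtype.val J 0) x = ∏ i : B, walsh (J i) (x i) := by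
  rw [walshProd, ← Finset.prod_subset (Finset.subset_univ B) fun i _ hi => by
    rw [extend_val_eq_zero J i hi, walsh_zero], ← Finset.prod_coe_sort]
  exact Finset.prod_congr rfl fun i _ => by rw [Subtype.val_injective.extend_apply]

/-- The indicator function of the dyadic cell `t` in the variables of `B`, normalised to have
integral `1`. -/
def cellBump {B : Finset (Fin d)} {N : ℕ} (t : B → SignVec N) (x : Fin d → ℝ) : ℝ :=
  if rademacherSignsOn B N x = t then (2 ^ N) ^ B.card else 0

lemma cellBump_eq_sum {B : Finset (Fin d)} {N : ℕ} (t : B → SignVec N) :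
    cellBump t = ∑ J ∈ Fintype.piFinset fun _ : B => Finset.range (2 ^ N),
      (∏ i, walshMonomial (J i) (signSeq (t i))) •
        walshProd (Function.extend Subtype.val J 0) := by
  funext x
  simp only [Finset.sum_apply, Pi.smul_apply, smul_eq_mul, walshProd_extend,
    ← Finset.prod_mul_distrib]
  rw [← Finset.prod_univ_sum (fun _ : B => Finset.range (2 ^ N))
    fun i j => walshMonomial j (signSeq (t i)) * walsh j (x i)]
  simp only [sum_walshMonomial_mul_walsh, cellBump]
  rw [Fintype.prod_ite_zero, Finset.prod_const, Finset.card_univ, Fintype.card_coe]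
  exact if_congr funext_iff rfl rfl

lemma cellBump_mem_uniformlyReproduced {B : Finset (Fin d)} {N : ℕ} (t : B → SignVec N) :
    cellBump t ∈ uniformlyReproduced (isBoundedL1Linfty_diagLogMean B) := by
  rw [cellBump_eq_sum]
  exact Submodule.sum_mem _ fun J _ => Submodule.smul_mem _ _ <|
    walshProd_mem_uniformlyReproduced (extend_val_eq_zero J)

lemma norlundKernel_rademacherSigns_mul {N n : ℕ} (hn : n ≤ 2 ^ N) (u : ℝ) (γ : SignVec N) :
    norlundKernel n (rademacherSigns N u * γ) = ∑ j ∈ Finset.range (2 ^ N),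
      walshMonomial j (signSeq γ) * (logSum (n - j) / logSum n * walsh j u) := by
  rw [norlundKernel, norlundSum_eq_sum_range hn, Finset.sum_div]
  refine Finset.sum_congr rfl fun j hj => ?_
  rw [signSeq_mul, walshMonomial_mul,
    walsh_eq_walshMonomial_rademacherSigns (Finset.mem_range.1 hj)]
  ring

lemma diagLogMean_cellBump {B : Finset (Fin d)} {N n : ℕ} (hn : 2 ≤ n) (hnN : n ≤ 2 ^ N)
    (t : B → SignVec N) (x : Fin d → ℝ) :
    diagLogMean B n (cellBump t) x = ∏ i, norlundKernel n (rademacherSignsOn B N x i * t i) := by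
  have hT := isBoundedL1Linfty_diagLogMean B n
  have hterm (J : B → ℕ) : diagLogMean B n ((∏ i, walshMonomial (J i) (signSeq (t i))) •
      walshProd (Function.extend Subtype.val J 0)) x =
        ∏ i : B, walshMonomial (J i) (signSeq (t i)) *
          (logSum (n - J i) / logSum n * walsh (J i) (x i)) := by
    rw [hT.map_smul, diagLogMean_walshProd hn (extend_val_eq_zero J), Pi.smul_apply, Pi.smul_apply,
      smul_eq_mul, smul_eq_mul, walshProd_extend, ← Finset.prod_coe_sort B,
      ← Finset.prod_mul_distrib, ← Finset.prod_mul_distrib]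
    simp only [Subtype.val_injective.extend_apply]
  rw [cellBump_eq_sum, hT.map_sum fun J _ => (integrable_walshProd _).smul _, Finset.sum_apply,
    Finset.sum_congr rfl fun J _ => hterm J,
    ← Finset.prod_univ_sum (fun _ : B => Finset.range (2 ^ N)) fun i j =>
      walshMonomial j (signSeq (t i)) * (logSum (n - j) / logSum n * walsh j (x i))]
  exact Finset.prod_congr rfl fun i _ => (norlundKernel_rademacherSigns_mul hnN _ _).symm

end DiagLogMean

/-! ### The gliding hump -/

section GlidingHump

variable {α : Type*} [MeasurableSpace α] {μ : Measure α}

lemma integrable_tsum_and_integral_abs_tsum_le {f : ℕ → α → ℝ} {δ : ℕ → ℝ}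
    (hm : ∀ k, Measurable (f k)) (hi : ∀ k, Integrable (f k) μ)
    (hδ : ∀ k, ∫ x, |f k x| ∂μ ≤ δ k) (hs : Summable δ) :
    Integrable (fun x => ∑' k, f k x) μ ∧ ∫ x, |∑' k, f k x| ∂μ ≤ ∑' k, δ k := by
  have hδ0 : ∀ k, 0 ≤ δ k := fun k => (integral_nonneg fun x => abs_nonneg _).trans (hδ k)
  have hlint : ∫⁻ x, ‖∑' k, f k x‖ₑ ∂μ ≤ ENNReal.ofReal (∑' k, δ k) := by
    calc ∫⁻ x, ‖∑' k, f k x‖ₑ ∂μ ≤ ∫⁻ x, ∑' k, ‖f k x‖ₑ ∂μ :=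
          lintegral_mono fun x => enorm_tsum_le_tsum_enorm
      _ = ∑' k, ∫⁻ x, ‖f k x‖ₑ ∂μ := lintegral_tsum fun k => (hm k).enorm.aemeasurable
      _ ≤ ∑' k, ENNReal.ofReal (δ k) := by
          refine ENNReal.tsum_le_tsum fun k => ?_
          rw [← ofReal_integral_norm_eq_lintegral_enorm (hi k)]
          exact ENNReal.ofReal_le_ofReal (hδ k)
      _ = ENNReal.ofReal (∑' k, δ k) := (ENNReal.ofReal_tsum_of_nonneg hδ0 hs).symm
  have hintegrable : Integrable (fun x => ∑' k, f k x) μ :=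
    ⟨(Measurable.tsum hm).aestronglyMeasurable, hlint.trans_lt ENNReal.ofReal_lt_top⟩
  rw [← ofReal_integral_norm_eq_lintegral_enorm hintegrable] at hlint
  exact ⟨hintegrable, (ENNReal.ofReal_le_ofReal_iff (tsum_nonneg hδ0)).1 hlint⟩

lemma tendsto_measureReal_le_atTop [IsFiniteMeasure μ] {u : α → ℝ} (hu : Measurable u) :
    Tendsto (fun c : ℝ => μ.real {x | c ≤ u x}) atTop (nhds 0) := by
  have hempty : ⋂ c : ℝ, {x | c ≤ u x} = ∅ :=
    Set.eq_empty_of_forall_notMem fun x hx =>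
      (lt_add_one (u x)).not_ge (Set.mem_iInter.1 hx (u x + 1))
  have hlim := tendsto_measure_iInter_atTop (μ := μ) (s := fun c : ℝ => {x | c ≤ u x})
    (fun c => (measurableSet_le measurable_const hu).nullMeasurableSet)
    (fun c c' hc x hx => hc.trans hx) ⟨0, measure_ne_top _ _⟩
  rw [hempty, measure_empty] at hlim
  exact (ENNReal.tendsto_toReal ENNReal.zero_ne_top).comp hlim

lemma tendsto_measureReal_le_abs_add_of_tendstoInMeasure [IsFiniteMeasure μ]
    {S : ℕ → α → ℝ} {g u : α → ℝ} {c : ℕ → ℝ} (hS : TendstoInMeasure μ S atTop g)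
    (hg : Measurable g) (hu : Measurable u) (hc : Tendsto c atTop atTop) :
    Tendsto (fun k => μ.real {x | c k ≤ |S k x| + u x}) atTop (nhds 0) := by
  have hfar := tendstoInMeasure_iff_measureReal_dist.1 hS 1 one_pos
  have htail := (tendsto_measureReal_le_atTop (μ := μ) ((hg.abs.add hu).add_const 1)).comp hc
  refine squeeze_zero (fun k => measureReal_nonneg) (fun k => ?_) (by simpa using hfar.add htail)
  refine (measureReal_mono fun x hx => ?_).trans (measureReal_union_le _ _)
  rcases le_total 1 (dist (S k x) (g x)) with hdist | hdist
  · exact Or.inl hdist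
  · have htriangle := abs_sub_abs_le_abs_sub (S k x) (g x)
    rw [Real.dist_eq] at hdist
    rw [Set.mem_ofPred_eq] at hx
    refine Or.inr (show c k ≤ |g x| + u x + 1 from ?_)
    linarith

lemma measurable_comp_abs_of_monotoneOn {φ : ℝ → ℝ} (hφ : MonotoneOn φ (Set.Ici 0)) {u : α → ℝ}
    (hu : Measurable u) : Measurable fun x => φ |u x| := by
  have hmono : Monotone fun y => φ (max 0 y) := fun y z hyz =>
    hφ (le_max_left 0 y) (le_max_left 0 z) (max_le_max le_rfl hyz)
  have hmax : (fun x => φ |u x|) = (fun y => φ (max 0 y)) ∘ fun x => |u x| :=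
    funext fun x => congrArg φ (max_eq_right (abs_nonneg (u x))).symm
  exact hmax ▸ hmono.measurable.comp hu.abs

/-- A hump at `index` for the operators `T n`: a function whose nonzero values are `± height`, of
`φ`-size at most `mass`, reproduced uniformly by `T n` as `n → ∞`, while `T index` carries it
above `level` on a set of measure at least `θ`. -/
structure Hump (μ : Measure α) (T : ℕ → (α → ℝ) → α → ℝ) (φ : ℝ → ℝ) (θ : ℝ) where
  toFun : α → ℝ
  index : ℕ
  height : ℝ
  mass : ℝ
  level : ℝ
  measurable : Measurable toFun
  tendstoUniformly : TendstoUniformly (fun n => T n toFun) toFun atTop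
  one_le_height : 1 ≤ height
  mass_pos : 0 < mass
  eq_zero_or_abs_eq (x : α) : toFun x = 0 ∨ |toFun x| = height
  height_mul_le : height * μ.real (Function.support toFun) ≤ mass
  phi_mul_le : φ (2 * height) * μ.real (Function.support toFun) ≤ mass
  le_measureReal : θ ≤ μ.real {x | level ≤ |T index toFun x|}

namespace Hump

variable {T : ℕ → (α → ℝ) → α → ℝ} {φ : ℝ → ℝ} {θ : ℝ}

lemma measurableSet_support (h : Hump μ T φ θ) : MeasurableSet (Function.support h.toFun) :=
  _root_.measurableSet_support h.measurable

lemma abs_eq_indicator (h : Hump μ T φ θ) :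
    (fun x => |h.toFun x|) = (Function.support h.toFun).indicator fun _ => h.height := by
  funext x
  by_cases hx : h.toFun x = 0
  · rw [Set.indicator_of_notMem (Function.notMem_support.2 hx), hx, abs_zero]
  · rw [Set.indicator_of_mem (Function.mem_support.2 hx)]
    exact (h.eq_zero_or_abs_eq x).resolve_left hx

lemma abs_le_height (h : Hump μ T φ θ) (x : α) : |h.toFun x| ≤ h.height := by
  rw [congrFun h.abs_eq_indicator x]
  exact Set.indicator_le_self' (fun _ _ => zero_le_one.trans h.one_le_height) x

lemma integrable [IsFiniteMeasure μ] (h : Hump μ T φ θ) : Integrable h.toFun μ :=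
  .of_bound h.measurable.aestronglyMeasurable h.height (.of_forall h.abs_le_height)

lemma integral_abs_le (h : Hump μ T φ θ) : ∫ x, |h.toFun x| ∂μ ≤ h.mass := by
  rw [h.abs_eq_indicator, integral_indicator_const _ h.measurableSet_support, smul_eq_mul, mul_comm]
  exact h.height_mul_le

/-- The hump `h'` is so much later, higher and lighter than `h` that neither interferes with the
action on the other of the operator at its index. `C n` bounds `T n` from `L¹` to the bounded
functions. -/
structure Precedes (C : ℕ → ℝ) (h h' : Hump μ T φ θ) : Prop where
  index_lt : h.index < h'.index
  level_add_one_le : h.level + 1 ≤ h'.level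
  two_mul_height_le : 2 * h.height ≤ h'.height
  two_mul_mass_le : 2 * h'.mass ≤ h.mass
  bound_mul_mass_le : C h.index * (2 * h'.mass) ≤ 1
  abs_apply_sub_le (x : α) : |T h'.index h.toFun x - h.toFun x| ≤ h.mass

lemma exists_seq_precedes (C : ℕ → ℝ)
    (hump : ∀ c > 0, ∀ δ > 0, ∀ (R : ℝ) (n₀ : ℕ), ∃ h : Hump μ T φ θ,
      h.level = c ∧ h.mass = δ ∧ R ≤ h.height ∧ n₀ ≤ h.index) :
    ∃ h : ℕ → Hump μ T φ θ, ∀ i j, i < j → (h i).Precedes C (h j) := by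
  suffices hstep : ∀ s : Finset (Hump μ T φ θ), ∃ h', ∀ h ∈ s, h.Precedes C h' by
    obtain ⟨h, -, hh⟩ := exists_seq_of_forall_finset_exists (fun _ : Hump μ T φ θ => True)
      (Precedes C) fun s _ => (hstep s).imp fun _ hh' => ⟨trivial, hh'⟩
    exact ⟨h, hh⟩
  intro s
  have hlevel : ∀ᶠ c in atTop, ∀ h ∈ s, h.level + 1 ≤ c :=
    s.eventually_all.2 fun h _ => eventually_ge_atTop _
  have hheight : ∀ᶠ R in atTop, ∀ h ∈ s, 2 * h.height ≤ R :=
    s.eventually_all.2 fun h _ => eventually_ge_atTop _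
  have hmass : ∀ᶠ δ in nhdsWithin (0 : ℝ) (Set.Ioi 0), ∀ h ∈ s,
      2 * δ ≤ h.mass ∧ C h.index * (2 * δ) ≤ 1 := by
    refine s.eventually_all.2 fun h _ => ((?_ : ∀ᶠ _ in _, _).and ?_).filter_mono nhdsWithin_le_nhds
    · exact (continuous_const_mul (2 : ℝ)).tendsto' 0 0 (by simp) |>.eventually_le_const h.mass_pos
    · exact (by fun_prop : Continuous fun δ : ℝ => C h.index * (2 * δ)).tendsto' 0 0 (by simp)
        |>.eventually_le_const one_pos
  have hindex : ∀ᶠ n in atTop, ∀ h ∈ s,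
      h.index < n ∧ ∀ x, |T n h.toFun x - h.toFun x| ≤ h.mass := by
    refine s.eventually_all.2 fun h _ => (eventually_gt_atTop _).and ?_
    filter_upwards [Metric.tendstoUniformly_iff.1 h.tendstoUniformly h.mass h.mass_pos] with n hn x
    rw [abs_sub_comm, ← Real.dist_eq]
    exact (hn x).le
  obtain ⟨c, hc, hc0⟩ := (hlevel.and (eventually_gt_atTop 0)).exists
  obtain ⟨δ, hδ, hδ0⟩ := (hmass.and self_mem_nhdsWithin).exists
  obtain ⟨R, hR⟩ := hheight.exists
  obtain ⟨n₀, hn₀⟩ := eventually_atTop.1 hindex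
  obtain ⟨h', rfl, rfl, hRh', hn₀h'⟩ := hump c hc0 δ hδ0 R n₀
  exact ⟨h', fun h hs => ⟨(hn₀ _ hn₀h' h hs).1, hc h hs, (hR h hs).trans hRh', (hδ h hs).1,
    (hδ h hs).2, (hn₀ _ hn₀h' h hs).2⟩⟩

section Sequence

variable {C : ℕ → ℝ} {h : ℕ → Hump μ T φ θ}

lemma mass_add_le (hh : ∀ i j, i < j → (h i).Precedes C (h j)) (k j : ℕ) :
    (h (j + k)).mass ≤ (h k).mass * (1 / 2) ^ j := by
  induction j with
  | zero => simp
  | succ j ih =>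
    have hhalf := (hh (j + k) (j + 1 + k) (by lia)).two_mul_mass_le
    rw [pow_succ]
    linarith

lemma summable_mass_add (hh : ∀ i j, i < j → (h i).Precedes C (h j)) (k : ℕ) :
    Summable fun j => (h (j + k)).mass :=
  .of_nonneg_of_le (fun _ => (h _).mass_pos.le) (mass_add_le hh k)
    (summable_geometric_two.mul_left _)

lemma summable_mass (hh : ∀ i j, i < j → (h i).Precedes C (h j)) : Summable fun k => (h k).mass :=
  summable_mass_add hh 0

lemma tsum_mass_add_le (hh : ∀ i j, i < j → (h i).Precedes C (h j)) (k : ℕ) :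
    ∑' j, (h (j + k)).mass ≤ 2 * (h k).mass := by
  refine ((summable_mass_add hh k).tsum_le_tsum (mass_add_le hh k)
    (summable_geometric_two.mul_left _)).trans_eq ?_
  rw [tsum_mul_left, tsum_geometric_two, mul_comm]

lemma sum_height_le (hh : ∀ i j, i < j → (h i).Precedes C (h j)) (k : ℕ) :
    ∑ i ∈ Finset.range k, (h i).height ≤ (h k).height := by
  induction k with
  | zero => simpa using zero_le_one.trans (h 0).one_le_height
  | succ k ih =>
    rw [Finset.sum_range_succ]
    linarith [(hh k (k + 1) k.lt_succ_self).two_mul_height_le]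

lemma tendsto_index (hh : ∀ i j, i < j → (h i).Precedes C (h j)) :
    Tendsto (fun k => (h k).index) atTop atTop :=
  StrictMono.tendsto_atTop fun i j hij => (hh i j hij).index_lt

lemma tendsto_level (hh : ∀ i j, i < j → (h i).Precedes C (h j)) :
    Tendsto (fun k => (h k).level) atTop atTop := by
  have hlevel : ∀ k : ℕ, (h 0).level + k ≤ (h k).level := by
    intro k
    induction k with
    | zero => simp
    | succ k ih =>
      push_cast
      linarith [(hh k (k + 1) k.lt_succ_self).level_add_one_le]
  exact tendsto_atTop_mono hlevel (tendsto_atTop_add_const_left _ _ tendsto_natCast_atTop_atTop)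

lemma abs_tsum_le_two_mul_height (hh : ∀ i j, i < j → (h i).Precedes C (h j)) {x : α} {J : ℕ}
    (hJ : ∀ k, J < k → (h k).toFun x = 0) : |∑' k, (h k).toFun x| ≤ 2 * (h J).height := by
  calc |∑' k, (h k).toFun x| = |∑ k ∈ Finset.range (J + 1), (h k).toFun x| := by
        rw [tsum_eq_sum (s := Finset.range (J + 1)) fun k hk => hJ k (by simpa using hk)]
    _ ≤ ∑ k ∈ Finset.range (J + 1), (h k).height :=
        (Finset.abs_sum_le_sum_abs _ _).trans (Finset.sum_le_sum fun k _ => (h k).abs_le_height x)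
    _ ≤ 2 * (h J).height := by
        rw [Finset.sum_range_succ]
        linarith [sum_height_le hh J]

lemma abs_sum_apply_le (hh : ∀ i j, i < j → (h i).Precedes C (h j)) (k : ℕ) {x : α}
    (hx : Summable fun i => |(h i).toFun x|) :
    |∑ i ∈ Finset.range k, T (h k).index (h i).toFun x| ≤
      ∑' i, (h i).mass + ∑' i, |(h i).toFun x| := by
  have hterm : ∀ i ∈ Finset.range k,
      |T (h k).index (h i).toFun x| ≤ (h i).mass + |(h i).toFun x| := fun i hi =>
    sub_le_iff_le_add.1 ((abs_sub_abs_le_abs_sub _ _).trans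
      ((hh i k (Finset.mem_range.1 hi)).abs_apply_sub_le x))
  calc _ ≤ ∑ i ∈ Finset.range k, ((h i).mass + |(h i).toFun x|) :=
        (Finset.abs_sum_le_sum_abs _ _).trans (Finset.sum_le_sum hterm)
    _ = ∑ i ∈ Finset.range k, (h i).mass + ∑ i ∈ Finset.range k, |(h i).toFun x| :=
        Finset.sum_add_distrib
    _ ≤ ∑' i, (h i).mass + ∑' i, |(h i).toFun x| :=
        add_le_add ((summable_mass hh).sum_le_tsum _ fun i _ => (h i).mass_pos.le)
          (hx.sum_le_tsum _ fun i _ => abs_nonneg _)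

variable [IsFiniteMeasure μ]

lemma ae_eventually_eq_zero (hh : ∀ i j, i < j → (h i).Precedes C (h j)) :
    ∀ᵐ x ∂μ, ∀ᶠ k in atTop, (h k).toFun x = 0 := by
  have hle : ∀ k, μ (Function.support (h k).toFun) ≤ ENNReal.ofReal (h k).mass := fun k => by
    rw [← ofReal_measureReal]
    exact ENNReal.ofReal_le_ofReal
      ((le_mul_of_one_le_left measureReal_nonneg (h k).one_le_height).trans (h k).height_mul_le)
  have hsum : ∑' k, μ (Function.support (h k).toFun) ≠ ⊤ := by
    refine ((ENNReal.tsum_le_tsum hle).trans_lt ?_).ne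
    rw [← ENNReal.ofReal_tsum_of_nonneg (fun k => (h k).mass_pos.le) (summable_mass hh)]
    exact ENNReal.ofReal_lt_top
  filter_upwards [ae_eventually_notMem hsum] with x hx
  exact hx.mono fun k => Function.notMem_support.1

lemma ae_summable (hh : ∀ i j, i < j → (h i).Precedes C (h j)) :
    ∀ᵐ x ∂μ, Summable fun k => |(h k).toFun x| := by
  filter_upwards [ae_eventually_eq_zero hh] with x hx
  rw [← Nat.cofinite_eq_atTop, eventually_cofinite] at hx
  exact summable_of_hasFiniteSupport (hx.subset fun k hk => abs_ne_zero.1 hk)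

lemma integrable_tsum_add (hh : ∀ i j, i < j → (h i).Precedes C (h j)) (k : ℕ) :
    Integrable (fun x => ∑' j, (h (j + k)).toFun x) μ ∧
      ∫ x, |∑' j, (h (j + k)).toFun x| ∂μ ≤ 2 * (h k).mass :=
  (integrable_tsum_and_integral_abs_tsum_le (fun _ => (h _).measurable)
    (fun _ => (h _).integrable) (fun _ => (h _).integral_abs_le) (summable_mass_add hh k)).imp_right
    fun hle => hle.trans (tsum_mass_add_le hh k)

lemma integrable_tsum (hh : ∀ i j, i < j → (h i).Precedes C (h j)) :
    Integrable (fun x => ∑' k, (h k).toFun x) μ :=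
  (integrable_tsum_add hh 0).1

lemma ae_exists_phi_abs_tsum_le (hφ : MonotoneOn φ (Set.Ici 0))
    (hh : ∀ i j, i < j → (h i).Precedes C (h j)) :
    ∀ᵐ x ∂μ, (∑' k, (h k).toFun x = 0) ∨
      ∃ J, (h J).toFun x ≠ 0 ∧ φ |∑' k, (h k).toFun x| ≤ φ (2 * (h J).height) := by
  filter_upwards [ae_eventually_eq_zero hh] with x hx
  by_cases hall : ∀ k, (h k).toFun x = 0
  · exact Or.inl (by simp [hall])
  right
  obtain ⟨K, hK⟩ := eventually_atTop.1 hx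
  have hbdd : BddAbove {k | (h k).toFun x ≠ 0} :=
    ⟨K, fun k hk => not_lt.1 fun hKk => hk (hK k hKk.le)⟩
  have hlast : ∀ k, sSup {k | (h k).toFun x ≠ 0} < k → (h k).toFun x = 0 := fun k hk =>
    of_not_not (notMem_of_csSup_lt hk hbdd)
  have hle := abs_tsum_le_two_mul_height hh hlast
  exact ⟨_, Nat.sSup_mem (not_forall.1 hall) hbdd,
    hφ (Set.mem_Ici.2 (abs_nonneg _)) (Set.mem_Ici.2 ((abs_nonneg _).trans hle)) hle⟩

lemma integrable_phi_abs_tsum (hφ0 : ∀ x ≥ (0 : ℝ), 0 ≤ φ x) (hφ : MonotoneOn φ (Set.Ici 0))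
    (hh : ∀ i j, i < j → (h i).Precedes C (h j)) :
    Integrable (fun x => φ |∑' k, (h k).toFun x|) μ := by
  set u : ℕ → α → ℝ := fun k =>
    (Function.support (h k).toFun).indicator fun _ => φ (2 * (h k).height)
  have hφh : ∀ k, 0 ≤ φ (2 * (h k).height) := fun k => hφ0 _ (by linarith [(h k).one_le_height])
  have hu0 : ∀ k x, 0 ≤ u k x := fun k => Set.indicator_nonneg fun _ _ => hφh k
  have hu_le : ∀ k, ∫ x, |u k x| ∂μ ≤ (h k).mass := fun k => by
    simp only [abs_of_nonneg (hu0 k _), u]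
    rw [integral_indicator_const _ (h k).measurableSet_support, smul_eq_mul, mul_comm]
    exact (h k).phi_mul_le
  have husum : Integrable (fun x => ∑' k, u k x) μ :=
    (integrable_tsum_and_integral_abs_tsum_le
      (fun k => measurable_const.indicator (h k).measurableSet_support)
      (fun k => (integrable_const _).indicator (h k).measurableSet_support) hu_le
      (summable_mass hh)).1
  have hmeas : Measurable fun x => φ |∑' k, (h k).toFun x| :=
    measurable_comp_abs_of_monotoneOn hφ (Measurable.tsum fun k => (h k).measurable)
  refine ((integrable_const (φ 0)).add husum).mono' hmeas.aestronglyMeasurable ?_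
  filter_upwards [ae_exists_phi_abs_tsum_le hφ hh, ae_eventually_eq_zero hh] with x hx hfin
  rw [Real.norm_of_nonneg (hφ0 _ (abs_nonneg _)), Pi.add_apply]
  rcases hx with hx | ⟨J, hJ, hle⟩
  · rw [hx, abs_zero]
    exact le_add_of_nonneg_right (tsum_nonneg fun k => hu0 k x)
  · rw [← Nat.cofinite_eq_atTop, eventually_cofinite] at hfin
    have hsummable : Summable fun k => u k x :=
      summable_of_hasFiniteSupport (hfin.subset fun k hk => (Set.mem_of_indicator_ne_zero hk :))
    calc φ |∑' k, (h k).toFun x| ≤ φ (2 * (h J).height) := hle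
      _ = u J x :=
        (Set.indicator_of_mem (Function.mem_support.2 hJ) fun _ => φ (2 * (h J).height)).symm
      _ ≤ ∑' k, u k x := hsummable.le_tsum J fun k _ => hu0 k x
      _ ≤ φ 0 + ∑' k, u k x := le_add_of_nonneg_left (hφ0 0 le_rfl)

lemma apply_tsum_eq (hT : ∀ n, IsBoundedL1Linfty μ (C n) (T n))
    (hh : ∀ i j, i < j → (h i).Precedes C (h j)) (n k : ℕ) :
    T n (fun x => ∑' i, (h i).toFun x) = ∑ i ∈ Finset.range k, T n (h i).toFun +
      T n (h k).toFun + T n (fun x => ∑' j, (h (j + (k + 1))).toFun x) := by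
  have hintegrable : ∀ i ∈ Finset.range (k + 1), Integrable (h i).toFun μ :=
    fun i _ => (h i).integrable
  have hhead := integrable_finsetSum' _ hintegrable
  have htail := (integrable_tsum_add hh (k + 1)).1
  have hsplit : (fun x => ∑' i, (h i).toFun x) =ᵐ[μ]
      ∑ i ∈ Finset.range (k + 1), (h i).toFun + fun x => ∑' j, (h (j + (k + 1))).toFun x := by
    filter_upwards [ae_summable hh] with x hx
    rw [Pi.add_apply, Finset.sum_apply, hx.of_abs.sum_add_tsum_nat_add]
  rw [(hT n).congr_ae (integrable_tsum hh) (hhead.add htail) hsplit, (hT n).map_add hhead htail,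
    (hT n).map_sum hintegrable, Finset.sum_range_succ]

lemma abs_apply_tail_le_one (hT : ∀ n, IsBoundedL1Linfty μ (C n) (T n))
    (hh : ∀ i j, i < j → (h i).Precedes C (h j)) (k : ℕ) (x : α) :
    |T (h k).index (fun y => ∑' j, (h (j + (k + 1))).toFun y) x| ≤ 1 := by
  obtain ⟨hintegrable, hle⟩ := integrable_tsum_add hh (k + 1)
  calc _ ≤ C (h k).index * ∫ y, |∑' j, (h (j + (k + 1))).toFun y| ∂μ :=
        (hT _).abs_apply_le hintegrable x
    _ ≤ C (h k).index * (2 * (h (k + 1)).mass) := mul_le_mul_of_nonneg_left hle (hT _).nonneg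
    _ ≤ 1 := (hh k (k + 1) k.lt_succ_self).bound_mul_mass_le

lemma ae_abs_apply_hump_le (hT : ∀ n, IsBoundedL1Linfty μ (C n) (T n))
    (hh : ∀ i j, i < j → (h i).Precedes C (h j)) (k : ℕ) :
    ∀ᵐ x ∂μ, |T (h k).index (h k).toFun x| ≤ |T (h k).index (fun y => ∑' i, (h i).toFun y) x| +
      (∑' i, (h i).mass + ∑' i, |(h i).toFun x| + 1) := by
  filter_upwards [ae_summable hh] with x hx
  have hsplit := congrFun (apply_tsum_eq hT hh (h k).index k) x
  rw [Pi.add_apply, Pi.add_apply, Finset.sum_apply] at hsplit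
  have hhead := abs_le.1 (abs_sum_apply_le hh k hx)
  have htail := abs_le.1 (abs_apply_tail_le_one hT hh k x)
  rcases abs_cases (T (h k).index (h k).toFun x) with ⟨habs, -⟩ | ⟨habs, -⟩ <;> rw [habs]
  · linarith [le_abs_self (T (h k).index (fun y => ∑' i, (h i).toFun y) x)]
  · linarith [neg_abs_le (T (h k).index (fun y => ∑' i, (h i).toFun y) x)]

lemma not_tendstoInMeasure_tsum (hT : ∀ n, IsBoundedL1Linfty μ (C n) (T n)) (hθ : 0 < θ)
    (hh : ∀ i j, i < j → (h i).Precedes C (h j)) {g : α → ℝ} (hg : Measurable g) :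
    ¬ TendstoInMeasure μ (fun n => T n fun x => ∑' i, (h i).toFun x) atTop g := by
  intro hconv
  have hmeas : Measurable fun x => ∑' i, (h i).mass + ∑' i, |(h i).toFun x| + 1 :=
    ((Measurable.tsum fun i => (h i).measurable.abs).const_add _).add_const _
  have hzero := tendsto_measureReal_le_abs_add_of_tendstoInMeasure
    (hconv.comp (tendsto_index hh)) hg hmeas (tendsto_level hh)
  refine hθ.not_ge (ge_of_tendsto' hzero fun k => (h k).le_measureReal.trans ?_)
  refine ENNReal.toReal_mono (measure_ne_top _ _) (measure_mono_ae ?_)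
  filter_upwards [ae_abs_apply_hump_le hT hh k] with x hx hlevel
  exact le_trans hlevel hx

end Sequence

end Hump

theorem exists_integrable_not_tendstoInMeasure_of_humps [IsFiniteMeasure μ] {C : ℕ → ℝ}
    {T : ℕ → (α → ℝ) → α → ℝ} {φ : ℝ → ℝ} {θ : ℝ}
    (hT : ∀ n, IsBoundedL1Linfty μ (C n) (T n)) (hφ0 : ∀ x ≥ (0 : ℝ), 0 ≤ φ x)
    (hφ : MonotoneOn φ (Set.Ici 0)) (hθ : 0 < θ)
    (hump : ∀ c > 0, ∀ δ > 0, ∀ (R : ℝ) (n₀ : ℕ), ∃ h : Hump μ T φ θ,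
      h.level = c ∧ h.mass = δ ∧ R ≤ h.height ∧ n₀ ≤ h.index) :
    ∃ f : α → ℝ, Measurable f ∧ Integrable f μ ∧ Integrable (fun x => φ |f x|) μ ∧
      ∀ g : α → ℝ, Measurable g → ¬ TendstoInMeasure μ (fun n => T n f) atTop g := by
  obtain ⟨h, hh⟩ := Hump.exists_seq_precedes C hump
  exact ⟨fun x => ∑' k, (h k).toFun x, Measurable.tsum fun k => (h k).measurable,
    Hump.integrable_tsum hh, Hump.integrable_phi_abs_tsum hφ0 hφ hh,
    fun g hg => Hump.not_tendstoInMeasure_tsum hT hθ hh hg⟩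

end GlidingHump

/-! ### Humps for the logarithmic means -/

section SignedBumps

variable {d N n : ℕ} {B : Finset (Fin d)} (T : Finset (B → SignVec N)) (ε : (B → SignVec N) → ℤˣ)

/-- The sum of the bumps of the cells `t ∈ T`, taken with the signs `ε t`. -/
def signedBumps : (Fin d → ℝ) → ℝ := ∑ t ∈ T, ((ε t : ℤ) : ℝ) • cellBump t

lemma signedBumps_apply (x : Fin d → ℝ) :
    signedBumps T ε x = if rademacherSignsOn B N x ∈ T then
      ((ε (rademacherSignsOn B N x) : ℤ) : ℝ) * (2 ^ N) ^ B.card else 0 := by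
  simp only [signedBumps, Finset.sum_apply, Pi.smul_apply, smul_eq_mul, cellBump, mul_ite, mul_zero,
    Finset.sum_ite_eq]

lemma measurable_signedBumps : Measurable (signedBumps T ε) := by
  have hcomp : signedBumps T ε =
      (fun y => if y ∈ T then ((ε y : ℤ) : ℝ) * (2 ^ N) ^ B.card else 0) ∘ rademacherSignsOn B N :=
    funext fun x => signedBumps_apply T ε x
  exact hcomp ▸ Measurable.of_discrete.comp (measurable_rademacherSignsOn B N)

lemma signedBumps_mem_uniformlyReproduced :
    signedBumps T ε ∈ uniformlyReproduced (isBoundedL1Linfty_diagLogMean B) :=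
  Submodule.sum_mem _ fun t _ => Submodule.smul_mem _ _ (cellBump_mem_uniformlyReproduced t)

lemma signedBumps_eq_zero_or_abs_eq (x : Fin d → ℝ) :
    signedBumps T ε x = 0 ∨ |signedBumps T ε x| = (2 ^ N) ^ B.card := by
  rw [signedBumps_apply]
  split_ifs
  · refine Or.inr ?_
    rw [abs_mul, ← Int.cast_abs, Int.isUnit_iff_abs_eq.1 (ε _).isUnit, Int.cast_one, one_mul,
      abs_of_pos (by positivity)]
  · exact Or.inl rfl

lemma measureReal_support_signedBumps_le :
    (cubeMeasure d).real (Function.support (signedBumps T ε)) ≤ T.card / (2 ^ N) ^ B.card := by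
  rw [div_eq_mul_inv, ← measureReal_rademacherSignsOn_mem]
  refine measureReal_mono fun x hx => ?_
  by_contra hcell
  exact hx ((signedBumps_apply T ε x).trans (if_neg hcell))

lemma diagLogMean_signedBumps (hn : 2 ≤ n) (hnN : n ≤ 2 ^ N) (x : Fin d → ℝ) :
    diagLogMean B n (signedBumps T ε) x = ∑ t ∈ T, ((ε t : ℤ) : ℝ) *
      ∏ i, norlundKernel n ((rademacherSignsOn B N x * t) i) := by
  have hT := isBoundedL1Linfty_diagLogMean B n
  rw [signedBumps, hT.map_sum fun t _ => (cellBump_mem_uniformlyReproduced t).1.smul _,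
    Finset.sum_apply]
  refine Finset.sum_congr rfl fun t _ => ?_
  rw [hT.map_smul, Pi.smul_apply, smul_eq_mul, diagLogMean_cellBump hn hnN]
  rfl

end SignedBumps

section LogMeanHumps

variable {d : ℕ} {B : Finset (Fin d)}

lemma card_fun_signVec (B : Finset (Fin d)) (N : ℕ) :
    Fintype.card (B → SignVec N) = (2 ^ N) ^ B.card := by
  simp [SignVec]

lemma exists_signedBumps_le_measureReal {N n M : ℕ} {lam : ℝ} (hn : 2 ≤ n) (hnN : n ≤ 2 ^ N)
    (hM : Fintype.card (B → SignVec N) ≤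
      M * (Finset.univ.filter fun y : B → SignVec N => lam ≤ |∏ i, norlundKernel n (y i)|).card) :
    ∃ (T : Finset (B → SignVec N)) (ε : (B → SignVec N) → ℤˣ), T.card ≤ M ∧
      1 / 4 ≤ (cubeMeasure d).real {x | lam ≤ |diagLogMean B n (signedBumps T ε) x|} := by
  obtain ⟨T, ε, hTM, hcover⟩ :=
    exists_signed_cover (fun y : B → SignVec N => ∏ i, norlundKernel n (y i)) lam hM
  refine ⟨T, ε, hTM, ?_⟩
  have hmeas := measureReal_rademacherSignsOn_mem B N (Finset.univ.filter fun y =>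
    lam ≤ |∑ t ∈ T, ((ε t : ℤ) : ℝ) * ∏ i, norlundKernel n ((y * t) i)|)
  simp only [Finset.mem_filter_univ, ← diagLogMean_signedBumps T ε hn hnN] at hmeas
  rw [hmeas, ← div_eq_mul_inv, div_le_div_iff₀ (by norm_num) (by positivity), one_mul, mul_comm _ 4]
  rw [card_fun_signVec] at hcover
  exact_mod_cast hcover

/-- The height of the hump at scale `K` on which the means exceed `c` in absolute value; here
`p + 1` is the cardinality of `B`. -/
def humpHeight (p : ℕ) (c : ℝ) (K : ℕ) : ℝ :=
  c / kernelConst (p + 1) ^ (p + 1) * 4 ^ ((p + 1) * (p * K + 1))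

/-- The number of signed translates of the kernel product which at scale `K` suffice to make it
large on a quarter of the group of cells. -/
def coverCard (p K : ℕ) : ℕ := 4 ^ ((p + 1) * (2 * K + 1)) / K ^ p + 1

lemma coverCard_le (p : ℕ) {K : ℕ} (hK : 0 < K) :
    (coverCard p K : ℝ) ≤ 2 * 4 ^ ((p + 1) * (2 * K + 1)) / K ^ p := by
  have hpow : K ^ p ≤ 4 ^ ((p + 1) * (2 * K + 1)) :=
    calc K ^ p ≤ (4 ^ K) ^ p := Nat.pow_le_pow_left (Nat.lt_pow_self (by norm_num)).le _
      _ = 4 ^ (K * p) := (pow_mul ..).symm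
      _ ≤ 4 ^ ((p + 1) * (2 * K + 1)) := Nat.pow_le_pow_right (by norm_num) (by nlinarith)
  have hone : (1 : ℝ) ≤ 4 ^ ((p + 1) * (2 * K + 1)) / K ^ p :=
    (one_le_div (by positivity)).2 (by exact_mod_cast hpow)
  have hdiv : ((4 ^ ((p + 1) * (2 * K + 1)) / K ^ p : ℕ) : ℝ) ≤
      4 ^ ((p + 1) * (2 * K + 1)) / K ^ p := by
    exact_mod_cast Nat.cast_div_le (α := ℝ) (m := 4 ^ ((p + 1) * (2 * K + 1))) (n := K ^ p)
  rw [coverCard, mul_div_assoc, Nat.cast_add_one]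
  linarith

lemma card_le_coverCard_mul {p K : ℕ} (hB : B.card = p + 1) (hK : 9 ≤ K) :
    Fintype.card (B → SignVec (2 * ((p + 2) * K) + 2)) ≤ coverCard p K *
      (Finset.univ.filter fun y : B → SignVec (2 * ((p + 2) * K) + 2) =>
        kernelConst (p + 1) ^ (p + 1) * 4 ^ (2 * (p + 1) * K) ≤
          |∏ i, norlundKernel (pIdx ((p + 2) * K)) (y i)|).card := by
  have : Nonempty B := (Finset.card_pos.1 (hB ▸ p.succ_pos)).to_subtype
  have hlarge := le_card_filter_le_abs_prod_norlundKernel ((Fintype.card_coe B).trans hB) hK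
  refine le_trans ?_ (Nat.mul_le_mul_left (coverCard p K) hlarge)
  have hexp : (p + 1) * ((p + 1 + 1) * K) - 2 * (p + 1) * K = (p + 1) * (p * K) :=
    Nat.sub_eq_of_eq_add (by ring)
  have hK_pos : 0 < K := by omega
  have hcover : 4 ^ ((p + 1) * (2 * K + 1)) ≤ coverCard p K * K ^ p := by
    rw [coverCard, add_one_mul (_ / _)]
    exact (Nat.lt_div_mul_add (pow_pos hK_pos p)).le
  calc Fintype.card (B → SignVec (2 * ((p + 2) * K) + 2))
      = 4 ^ ((p + 1) * (2 * K + 1)) * 4 ^ ((p + 1) * (p * K)) := by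
        rw [card_fun_signVec, hB, ← pow_mul, ← pow_add, show 4 = 2 ^ 2 from rfl, ← pow_mul]
        ring_nf
    _ ≤ coverCard p K * K ^ p * 4 ^ ((p + 1) * (p * K)) := Nat.mul_le_mul_right _ hcover
    _ = _ := by rw [mul_assoc, Nat.add_sub_cancel, hexp]

lemma humpHeight_eq {p : ℕ} (hB : B.card = p + 1) (c : ℝ) (K : ℕ) :
    humpHeight p c K = c / (kernelConst (p + 1) ^ (p + 1) * 4 ^ (2 * (p + 1) * K)) *
      (2 ^ (2 * ((p + 2) * K) + 2)) ^ B.card := by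
  have hpow : ((2 : ℝ) ^ (2 * ((p + 2) * K) + 2)) ^ (p + 1) =
      4 ^ ((p + 1) * (p * K + 1)) * 4 ^ (2 * (p + 1) * K) := by
    rw [← pow_mul, ← pow_add, show (4 : ℝ) = 2 ^ 2 by norm_num, ← pow_mul]
    ring_nf
  have hkernel := kernelConst_pos (p + 1)
  rw [humpHeight, hB, hpow]
  field_simp

/-- A bound for the product of the height `humpHeight p c K` with the measure of the support of the
hump, up to the factor `K⁻ᵖ`. -/
def humpMassConst (p : ℕ) (c : ℝ) : ℝ := c * (2 * 4 ^ (p + 1) / kernelConst (p + 1) ^ (p + 1))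

lemma div_mul_coverCard_le (p : ℕ) {K : ℕ} (hK : 0 < K) {c : ℝ} (hc : 0 < c) :
    c / (kernelConst (p + 1) ^ (p + 1) * 4 ^ (2 * (p + 1) * K)) * coverCard p K ≤
      humpMassConst p c / K ^ p := by
  have hkernel := kernelConst_pos (p + 1)
  refine (mul_le_mul_of_nonneg_left (coverCard_le p hK) (by positivity)).trans_eq ?_
  rw [humpMassConst, show (p + 1) * (2 * K + 1) = 2 * (p + 1) * K + (p + 1) by ring,
    pow_add (4 : ℝ)]
  field_simp

lemma exists_bump {p K : ℕ} (hB : B.card = p + 1) (hK : 9 ≤ K) {c : ℝ} (hc : 0 < c) :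
    ∃ f ∈ uniformlyReproduced (isBoundedL1Linfty_diagLogMean B), Measurable f ∧
      (∀ x, f x = 0 ∨ |f x| = humpHeight p c K) ∧
      humpHeight p c K * (cubeMeasure d).real (Function.support f) ≤ humpMassConst p c / K ^ p ∧
      1 / 4 ≤ (cubeMeasure d).real {x | c ≤ |diagLogMean B (pIdx ((p + 2) * K)) f x|} := by
  have hn : 2 ≤ pIdx ((p + 2) * K) :=
    le_trans (by norm_num) ((Nat.pow_le_pow_right (n := 4) (by norm_num)
      (show 1 ≤ (p + 2) * K by nlinarith)).trans (four_pow_le_pIdx _))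
  have hnN : pIdx ((p + 2) * K) ≤ 2 ^ (2 * ((p + 2) * K) + 2) := by
    rw [← mul_add_one, pow_mul]
    exact (pIdx_lt _).le
  obtain ⟨T, ε, hTcard, hquarter⟩ :=
    exists_signedBumps_le_measureReal hn hnN (card_le_coverCard_mul hB hK)
  set lam := kernelConst (p + 1) ^ (p + 1) * 4 ^ (2 * (p + 1) * K) with hlam
  have hlam_pos : 0 < lam := by have := kernelConst_pos (p + 1); positivity
  have hscale : 0 < c / lam := div_pos hc hlam_pos
  refine ⟨(c / lam) • signedBumps T ε,
    Submodule.smul_mem _ _ (signedBumps_mem_uniformlyReproduced T ε),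
    (measurable_signedBumps T ε).const_smul _, fun x => ?_, ?_, ?_⟩
  · rw [Pi.smul_apply, smul_eq_mul, abs_mul, abs_of_pos hscale, humpHeight_eq hB]
    exact (signedBumps_eq_zero_or_abs_eq T ε x).imp (by simp [·]) (by rw [·])
  · rw [Function.support_const_smul_of_ne_zero _ _ hscale.ne', humpHeight_eq hB, ← hlam]
    calc _ ≤ c / lam * (2 ^ (2 * ((p + 2) * K) + 2)) ^ B.card *
            (coverCard p K / (2 ^ (2 * ((p + 2) * K) + 2)) ^ B.card) := by
          gcongr
          exact (measureReal_support_signedBumps_le T ε).trans (by gcongr)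
      _ = c / lam * coverCard p K := by field_simp
      _ ≤ humpMassConst p c / K ^ p := div_mul_coverCard_le p (by omega) hc
  · refine hquarter.trans (measureReal_mono fun x (hx : lam ≤ _) => ?_)
    rw [Set.mem_ofPred_eq, (isBoundedL1Linfty_diagLogMean B _).map_smul, Pi.smul_apply, smul_eq_mul,
      abs_mul, abs_of_pos hscale, ← div_le_iff₀' hscale, div_div_cancel₀ hc.ne']
    exact hx

lemma tendsto_humpHeight {p : ℕ} (hp : p ≠ 0) {c : ℝ} (hc : 0 < c) :
    Tendsto (humpHeight p c) atTop atTop := by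
  have hkernel := kernelConst_pos (p + 1)
  refine Tendsto.const_mul_atTop (by positivity)
    ((tendsto_pow_atTop_atTop_of_one_lt (by norm_num : (1 : ℝ) < 4)).comp
      (tendsto_atTop_mono (fun K => ?_) tendsto_id))
  calc K ≤ p * K := Nat.le_mul_of_pos_left _ (Nat.pos_of_ne_zero hp)
    _ ≤ p * K + 1 := Nat.le_succ _
    _ ≤ (p + 1) * (p * K + 1) := Nat.le_mul_of_pos_left _ p.succ_pos

/-- A bound for the growth of `log (2 * humpHeight p c K)` relative to `K`. -/
def humpLogConst (p : ℕ) (c : ℝ) : ℝ :=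
  |Real.log (2 * (c / kernelConst (p + 1) ^ (p + 1)))| + (p + 1) ^ 2 * Real.log 4

lemma humpLogConst_nonneg (p : ℕ) (c : ℝ) : 0 ≤ humpLogConst p c := by
  have := one_le_log_four
  rw [humpLogConst]
  positivity

lemma log_two_mul_humpHeight_le (p : ℕ) {c : ℝ} (hc : 0 < c) {K : ℕ} (hK : 1 ≤ K) :
    Real.log (2 * humpHeight p c K) ≤ humpLogConst p c * K := by
  have hkernel := kernelConst_pos (p + 1)
  have hK' : (1 : ℝ) ≤ K := by exact_mod_cast hK
  have hlog : 0 ≤ Real.log 4 := zero_le_one.trans one_le_log_four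
  have hexp : (((p + 1) * (p * K + 1) : ℕ) : ℝ) ≤ (p + 1) ^ 2 * K := by
    push_cast
    nlinarith
  rw [humpHeight, ← mul_assoc, Real.log_mul (by positivity) (by positivity), Real.log_pow,
    humpLogConst, add_mul |_|, mul_right_comm _ (Real.log 4)]
  exact add_le_add ((le_abs_self _).trans (le_mul_of_one_le_right (abs_nonneg _) hK'))
    (mul_le_mul_of_nonneg_right hexp hlog)

-- The factor `K⁻ᵖ` gained in the mass pays for the logarithmic factor
-- `log (2 * a K) ^ p ≤ (D * K) ^ p`.
lemma eventually_phi_two_mul_mul_le {φ : ℝ → ℝ} {p : ℕ} {a : ℕ → ℝ} {D Q δ : ℝ}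
    (hφ : Tendsto (fun x => φ x / (x * Real.log x ^ p)) atTop (nhds 0))
    (ha : Tendsto a atTop atTop) (hD : 0 ≤ D) (hQ : 0 ≤ Q) (hδ : 0 < δ)
    (hlog : ∀ K : ℕ, 1 ≤ K → Real.log (2 * a K) ≤ D * K) :
    ∀ᶠ K : ℕ in atTop, ∀ m ≥ 0, a K * m ≤ Q / K ^ p → φ (2 * a K) * m ≤ δ := by
  set η := δ / (2 * D ^ p * Q + 1)
  have hη : 0 < η := by positivity
  have h2a : Tendsto (fun K => 2 * a K) atTop atTop := ha.const_mul_atTop two_pos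
  filter_upwards [(hφ.comp h2a).eventually (eventually_le_nhds hη), h2a.eventually_gt_atTop 1,
    eventually_ge_atTop 1] with K hφK haK hK m hm hmass
  have hlog_pos : 0 < Real.log (2 * a K) := Real.log_pos haK
  have hK_pos : (0 : ℝ) < K := by exact_mod_cast hK
  have ha_pos : 0 < a K := by linarith
  rw [Function.comp_apply, div_le_iff₀ (by positivity)] at hφK
  rw [le_div_iff₀ (by positivity)] at hmass
  calc φ (2 * a K) * m ≤ η * (2 * a K * Real.log (2 * a K) ^ p) * m := by gcongr
    _ ≤ η * (2 * a K * (D * K) ^ p) * m := by gcongr; exact hlog K hK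
    _ = η * (2 * D ^ p * (a K * m * K ^ p)) := by ring
    _ ≤ η * (2 * D ^ p * Q) := by gcongr
    _ ≤ η * (2 * D ^ p * Q + 1) := by gcongr; exact (lt_add_one _).le
    _ = δ := div_mul_cancel₀ _ (by positivity)

lemma tendsto_pIdx_mul (p : ℕ) : Tendsto (fun K => pIdx ((p + 2) * K)) atTop atTop := by
  refine tendsto_atTop_mono (fun K => ?_) tendsto_id
  calc K ≤ (p + 2) * K := Nat.le_mul_of_pos_left _ (by omega)
    _ ≤ 4 ^ ((p + 2) * K) := (Nat.lt_pow_self (by norm_num)).le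
    _ ≤ pIdx ((p + 2) * K) := four_pow_le_pIdx _

lemma exists_hump {p : ℕ} (hp : p ≠ 0) (hB : B.card = p + 1) {φ : ℝ → ℝ}
    (hφ : Tendsto (fun x => φ x / (x * Real.log x ^ p)) atTop (nhds 0)) {c : ℝ} (hc : 0 < c)
    {δ : ℝ} (hδ : 0 < δ) (R : ℝ) (n₀ : ℕ) :
    ∃ h : Hump (cubeMeasure d) (diagLogMean B) φ (1 / 4),
      h.level = c ∧ h.mass = δ ∧ R ≤ h.height ∧ n₀ ≤ h.index := by
  have hheight := tendsto_humpHeight hp hc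
  have hmass : Tendsto (fun K : ℕ => humpMassConst p c / (K : ℝ) ^ p) atTop (nhds 0) :=
    ((tendsto_pow_atTop hp).comp tendsto_natCast_atTop_atTop).const_div_atTop _
  have hmass_nonneg : 0 ≤ humpMassConst p c := by
    have := kernelConst_pos (p + 1)
    rw [humpMassConst]
    positivity
  obtain ⟨K, hKφ, hKmass, hKR, hK1, hKn, hK⟩ :=
    ((eventually_phi_two_mul_mul_le hφ hheight (humpLogConst_nonneg p c) hmass_nonneg hδ
        fun K => log_two_mul_humpHeight_le p hc).and <|
      (hmass.eventually (eventually_le_nhds hδ)).and <| (hheight.eventually_ge_atTop R).and <|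
      (hheight.eventually_ge_atTop 1).and <| ((tendsto_pIdx_mul p).eventually_ge_atTop n₀).and <|
      eventually_ge_atTop 9).exists
  obtain ⟨f, hf, hfm, hfa, hfs, hfq⟩ := exists_bump hB hK hc
  exact ⟨{
    toFun := f
    index := pIdx ((p + 2) * K)
    height := humpHeight p c K
    mass := δ
    level := c
    measurable := hfm
    tendstoUniformly := hf.2
    one_le_height := hK1
    mass_pos := hδ
    eq_zero_or_abs_eq := hfa
    height_mul_le := hfs.trans hKmass
    phi_mul_le := hKφ _ measureReal_nonneg hfs
    le_measureReal := hfq }, rfl, rfl, hKR, hKn⟩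

end LogMeanHumps

/-- Corollary (measuredivergence). If `|B| > 1` and `φ(x) = o(x log^{|B|-1} x)`
with `φ` nondecreasing, there is `f ∈ L^1(I^d)` with `∫ φ(|f|) < ∞` whose means
`(L_{n(B)} ∘ R_{n(B')})(f)` diverge in measure on `I^d`. -/
theorem stmt7 (d : ℕ) (hd : 1 ≤ d) (B : Finset (Fin d)) (hB : 1 < B.card)
    (phi : ℝ → ℝ) (hphi0 : ∀ x ≥ (0:ℝ), 0 ≤ phi x) (hphimono : MonotoneOn phi (Set.Ici 0))
    (hphio : Tendsto (fun x => phi x / (x * Real.log x ^ (B.card - 1))) atTop (nhds 0)) :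
    ∃ f : (Fin d → ℝ) → ℝ, Measurable f ∧ Integrable f (cubeMeasure d) ∧
      Integrable (fun x => phi |f x|) (cubeMeasure d) ∧
      ∀ g : (Fin d → ℝ) → ℝ, Measurable g →
        ¬ TendstoInMeasure (cubeMeasure d)
          (fun n x => mixedLogMean B f (fun _ => n) x) atTop g := by
  have hcard : B.card = B.card - 1 + 1 := (Nat.sub_add_cancel hB.le).symm
  exact exists_integrable_not_tendstoInMeasure_of_humps (isBoundedL1Linfty_diagLogMean B)
    hphi0 hphimono (by norm_num) fun c hc δ hδ R n₀ =>
      exists_hump (Nat.sub_ne_zero_of_lt hB) hcard hphio hc hδ R n₀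

end
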